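/- arXiv:2205.15601 — 4 statements merged into one kernel-verified Lean document; each statement's English description precedes it below -/
import Mathlib

section
/- Let b ≥ 2 be an integer. For each pair (i,j) with i ≥ 1 and j ≥ 2 integers, let d_{i,j} and h_{i,j} be coprime positive integers, let S_{i,j} be a subset of the positive integers that contains every prime number p with p ≡ h_{i,j} (mod d_{i,j}), and let a_{i,j} : S_{i,j} → ℤ be a bounded function all of whose values are nonzero. Then the set consisting of the number 1 together with all the numbers f_{i,j}(1/b) = Σ_{n ∈ S_{i,j}} a_{i,j}(n)/b^{i·n^j}, for (i,j) ∈ ℕ_{≥1} × ℕ_{≥2}, is linearly independent over ℚ (i.e., every finite ℚ-linear relation among these numbers has all coefficients zero). -/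
/-!
An integer relation among the numbers has the form `∑ A N / b ^ N ∈ ℤ`, where `A : ℕ → ℤ` is
bounded and supported on the exponents `i * n ^ j`, with `(i, j)` in the finite support of the
relation. Such a sum cannot contain an isolated digit, i.e. a nonzero `A N₀` all of whose
neighbours within a distance `L` vanish, where `L` depends only on `b` and the bound on `A`
(`no_isolated_digit`). The proof produces an isolated digit at `N₀ = i₀ * p ^ j₀`, where
`(i₀, j₀)` is the pair of the support with `j₀` minimal and then `i₀` minimal, and `p` is a large
prime in a well-chosen residue class.

* The digit at `N₀` is nonzero: if `i * n ^ j = i₀ * p ^ j₀` with `p` larger than all the `i`,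
  then `p ∣ n`, and minimality forces `(i, j) = (i₀, j₀)`. So only that pair contributes, and
  it contributes its coefficient times `a i₀ j₀ p`.
* The digits at `N₀ + k` with `0 < |k| ≤ L` vanish: for each such `k` there is a prime `q`,
  dividing none of the `i`, and a residue class mod `q ^ 2` on which `i₀ * x ^ j₀ + k` is divisible
  by `q` exactly once (`exists_simple_prime`), hence is not of the form `i * n ^ j` with `j ≥ 2`.
  The classes for the different `k` are compatible with `h (mod d)` by the Chinese remainder theorem
  (`exists_isolating_progression`), and Dirichlet's theorem supplies `p`.
-/

lemma summable_digits {b : ℕ} (hb : 2 ≤ b) {A : ℕ → ℤ} {B : ℤ} (hA : ∀ N, |A N| ≤ B) :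
    Summable fun N => (A N : ℝ) / (b : ℝ) ^ N := by
  have hb' : (2 : ℝ) ≤ b := by exact_mod_cast hb
  have hg : Summable fun N : ℕ => (B : ℝ) * (1 / 2 : ℝ) ^ N :=
    summable_geometric_two.mul_left _
  refine hg.of_norm_bounded fun N => ?_
  have h1 : |(A N : ℝ)| ≤ B := by exact_mod_cast hA N
  have h2 : (2 : ℝ) ^ N ≤ (b : ℝ) ^ N := by gcongr
  rw [Real.norm_eq_abs, abs_div, abs_of_nonneg (by positivity : (0 : ℝ) ≤ (b : ℝ) ^ N),
    one_div, inv_pow, ← div_eq_mul_inv]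
  have : (0 : ℝ) ≤ B := (abs_nonneg _).trans h1
  gcongr

/-- If `∑ A N / b ^ N` is an integer and `|A| ≤ B`, then no nonzero `A N₀` is the only nonzero value
in the window `[N₀ - L, N₀ + L]`. After multiplication by `b ^ (N₀ + L)` the tail beyond the window
becomes an integer `Z` with `|Z| ≤ B`, while the terms before the window are multiples of
`b ^ (2 * L)`. So `b ^ (2 * L)` divides `Z + A N₀ * b ^ L`, which is nonzero but too small. -/
lemma no_isolated_digit {b : ℕ} (hb : 2 ≤ b) {A : ℕ → ℤ} {B : ℤ} (hA : ∀ N, |A N| ≤ B)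
    {c : ℤ} (hc : ∑' N, (A N : ℝ) / (b : ℝ) ^ N = c) {L N₀ : ℕ} (hL : B + 2 ≤ (b : ℤ) ^ L)
    (hLN : L ≤ N₀) (h0 : A N₀ ≠ 0)
    (hiso : ∀ N, N ≠ N₀ → N₀ ≤ N + L → N ≤ N₀ + L → A N = 0) : False := by
  have hb' : (2 : ℝ) ≤ b := by exact_mod_cast hb
  have hb0 : (b : ℝ) ≠ 0 := by positivity
  have hs := summable_digits hb hA
  set K := N₀ + L + 1 with hK
  have hsplit := hs.sum_add_tsum_nat_add K
  rw [hc] at hsplit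
  set T := ∑' i, (A (i + K) : ℝ) / (b : ℝ) ^ (i + K) with hT
  have hTb : |(b : ℝ) ^ (N₀ + L) * T| ≤ B := by
    rw [hT, ← tsum_mul_left, ← Real.norm_eq_abs]
    have hg : HasSum (fun i : ℕ => (B : ℝ) * ((1 / 2 : ℝ) ^ i * (1 / 2))) B := by
      simpa using (hasSum_geometric_two.mul_right (1 / 2 : ℝ)).mul_left (B : ℝ)
    refine tsum_of_norm_bounded hg fun i => ?_
    have h1 : |(A (i + K) : ℝ)| ≤ B := by exact_mod_cast hA (i + K)
    have h2 : (2 : ℝ) ^ (i + 1) ≤ (b : ℝ) ^ (i + 1) := by gcongr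
    have h3 : (b : ℝ) ^ (N₀ + L) * ((A (i + K) : ℝ) / (b : ℝ) ^ (i + K))
        = (A (i + K) : ℝ) / (b : ℝ) ^ (i + 1) := by
      generalize (A (i + K) : ℝ) = y
      rw [hK, show i + (N₀ + L + 1) = (N₀ + L) + (i + 1) by ring, pow_add _ (N₀ + L)]
      field_simp
    rw [h3, Real.norm_eq_abs, abs_div, abs_of_nonneg (by positivity : (0 : ℝ) ≤ (b : ℝ) ^ (i + 1)),
      ← pow_succ, one_div, inv_pow, ← div_eq_mul_inv]
    have : (0 : ℝ) ≤ B := (abs_nonneg _).trans h1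
    gcongr
  set Z : ℤ := (b : ℤ) ^ (N₀ + L) * c
    - ∑ N ∈ Finset.range K, A N * (b : ℤ) ^ (N₀ + L - N) with hZ
  have hZT : (Z : ℝ) = (b : ℝ) ^ (N₀ + L) * T := by
    have : T = c - ∑ N ∈ Finset.range K, (A N : ℝ) / (b : ℝ) ^ N := by linarith
    rw [this, hZ]
    push_cast
    rw [mul_sub, Finset.mul_sum]
    congr 1
    refine Finset.sum_congr rfl fun N hN => ?_
    have hN' : N ≤ N₀ + L := by have := Finset.mem_range.1 hN; omega
    rw [pow_sub₀ _ hb0 hN']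
    ring
  have hZB : |Z| ≤ B := by
    rw [← hZT] at hTb
    exact_mod_cast hTb
  have hdvd : (b : ℤ) ^ (2 * L) ∣ Z + A N₀ * (b : ℤ) ^ L := by
    have hmem : N₀ ∈ Finset.range K := Finset.mem_range.2 (by omega)
    rw [hZ, ← Finset.add_sum_erase _ _ hmem, show N₀ + L - N₀ = L by omega,
      sub_add_eq_add_sub, add_comm (A N₀ * _) (Finset.sum _ _), add_sub_add_right_eq_sub]
    refine dvd_sub (Dvd.dvd.mul_right (pow_dvd_pow _ (by omega)) _) (Finset.dvd_sum fun N hN => ?_)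
    obtain ⟨hne, hN⟩ := Finset.mem_erase.1 hN
    have := Finset.mem_range.1 hN
    by_cases h : N₀ ≤ N + L
    · rw [hiso N hne h (by omega), zero_mul]
      exact dvd_zero _
    · exact Dvd.dvd.mul_left (pow_dvd_pow _ (by omega)) _
  have hA1 : 1 ≤ |A N₀| := Int.one_le_abs h0
  have hA2 := hA N₀
  set X : ℤ := (b : ℤ) ^ L with hX
  have hX0 : 0 < X := by linarith
  have habs : |A N₀ * X| = |A N₀| * X := by rw [abs_mul, abs_of_pos hX0]
  rw [mul_comm 2 L, pow_mul, ← hX] at hdvd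
  by_cases hzero : Z + A N₀ * X = 0
  · have : |Z| = |A N₀ * X| := by rw [eq_neg_of_add_eq_zero_left hzero, abs_neg]
    nlinarith
  · have h1 := Int.le_of_dvd (abs_pos.2 hzero) ((dvd_abs _ _).2 hdvd)
    have h2 := abs_add_le Z (A N₀ * X)
    nlinarith

/-- The values of `i * x ^ j + k` at integers have prime divisors outside any finite set (given as the
divisors of `P`). -/
lemma exists_prime_dvd_value {i j : ℕ} (hi : 1 ≤ i) (hj : 2 ≤ j) {k : ℤ} (hk : k ≠ 0) {P : ℕ}
    (hP : 0 < P) : ∃ q : ℕ, q.Prime ∧ ¬ q ∣ P ∧ ∃ x : ℤ, (q : ℤ) ∣ i * x ^ j + k := by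
  obtain ⟨j, rfl⟩ := Nat.exists_eq_add_of_le hj
  -- The value at `x = 2 * k * P` is `k * (u + 1)`, where `u` is a multiple of `P` and of `4`.
  -- Hence `u + 1` is prime to `P` and is not a unit.
  set u : ℤ := i * k ^ (j + 1) * P ^ (j + 2) * 2 ^ (j + 2) with hu
  have hu0 : i * k ^ (j + 1) * P ^ (j + 2) * 2 ^ j ≠ 0 := by positivity
  have hne : (u + 1).natAbs ≠ 1 := by
    have : u = 4 * (i * k ^ (j + 1) * P ^ (j + 2) * 2 ^ j) := by rw [hu]; ring
    omega
  obtain ⟨q, hq, hqd⟩ := Nat.exists_prime_and_dvd hne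
  have hqd : (q : ℤ) ∣ u + 1 := Int.natCast_dvd.2 hqd
  refine ⟨q, hq, fun h => ?_, k * P * 2, ?_⟩
  · have h1 : (q : ℤ) ∣ u := by
      have : (q : ℤ) ∣ P := by exact_mod_cast h
      exact Dvd.dvd.mul_right (Dvd.dvd.mul_left (this.trans (dvd_pow_self _ (by omega))) _) _
    have h2 : (q : ℤ) ∣ 1 := (dvd_add_right h1).1 hqd
    exact hq.one_lt.ne' (by exact_mod_cast Int.eq_one_of_dvd_one (by positivity) h2)
  · have : (i : ℤ) * (k * P * 2) ^ (2 + j) + k = k * (u + 1) := by rw [hu]; ring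
    rw [this]
    exact Dvd.dvd.mul_left hqd _

/-- Outside any finite set of primes there is a `q` dividing some value `i * x ^ j + k` exactly once,
with `q ∤ x`. If `q ^ 2` divides the value at `x`, then shifting `x` by `q` repairs this, since `q`
does not divide the derivative `i * j * x ^ (j - 1)`. -/
lemma exists_simple_prime {i j : ℕ} (hi : 1 ≤ i) (hj : 2 ≤ j) {k : ℤ} (hk : k ≠ 0) {P : ℕ}
    (hP : 0 < P) : ∃ q : ℕ, q.Prime ∧ ¬ q ∣ P ∧ ∃ x : ℤ, ¬ (q : ℤ) ∣ x ∧
      (q : ℤ) ∣ i * x ^ j + k ∧ ¬ (q : ℤ) ^ 2 ∣ i * x ^ j + k := by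
  obtain ⟨q, hq, hqP, x, hx⟩ := exists_prime_dvd_value hi hj hk (P := P * i * j * k.natAbs)
    (by have := Int.natAbs_pos.2 hk; positivity)
  have hq' : Prime (q : ℤ) := Nat.prime_iff_prime_int.1 hq
  simp only [hq.dvd_mul, not_or] at hqP
  obtain ⟨⟨⟨hqP, hqi⟩, hqj⟩, hqk⟩ := hqP
  have hqx : ¬ (q : ℤ) ∣ x := fun h => hqk <| Int.natCast_dvd.1 <|
    (dvd_add_right (Dvd.dvd.mul_left (h.trans (dvd_pow_self _ (by omega))) _)).1 hx
  refine ⟨q, hq, hqP, ?_⟩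
  by_cases h2 : (q : ℤ) ^ 2 ∣ i * x ^ j + k
  · obtain ⟨w, hw⟩ := (Polynomial.powAddExpansion x (q : ℤ) j)
    have hval : (i : ℤ) * (x + q) ^ j + k
        = (i * x ^ j + k) + (q * (i * j * x ^ (j - 1)) + q ^ 2 * (i * w)) := by rw [hw]; ring
    refine ⟨x + q, fun h => hqx ((dvd_add_left dvd_rfl).1 h), ?_, fun h => ?_⟩
    · rw [hval]
      exact dvd_add hx (dvd_add (dvd_mul_right _ _) (Dvd.dvd.mul_right (dvd_pow_self _ two_ne_zero) _))
    · rw [hval, dvd_add_right h2, dvd_add_left (dvd_mul_right _ _), pow_two,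
        mul_dvd_mul_iff_left hq'.ne_zero] at h
      rcases hq'.dvd_or_dvd h with h | h
      · rcases hq'.dvd_or_dvd h with h | h
        · exact hqi (by exact_mod_cast h)
        · exact hqj (by exact_mod_cast h)
      · exact hqx (hq'.dvd_of_dvd_pow h)
  · exact ⟨x, hqx, hx, h2⟩

/-- The residue class `h (mod d)` contains a class `H (mod D)`, with `D` and `H` coprime, such that for
all `x` in it and all `k ∈ K` the number `i * x ^ j + k` is exactly once divisible by some prime
not dividing `P`. -/
lemma exists_isolating_progression {i j : ℕ} (hi : 1 ≤ i) (hj : 2 ≤ j) {d h P : ℕ} (hd : 0 < d)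
    (hdh : d.Coprime h) (hP : 0 < P) (K : Finset ℤ) (hK : ∀ k ∈ K, k ≠ 0) :
    ∃ D H : ℕ, 0 < D ∧ D.Coprime H ∧ d ∣ D ∧ H ≡ h [MOD d] ∧ ∀ x : ℕ, x ≡ H [MOD D] →
      ∀ k ∈ K, ∃ q : ℕ, q.Prime ∧ ¬ q ∣ P ∧
        (q : ℤ) ∣ i * (x : ℤ) ^ j + k ∧ ¬ (q : ℤ) ^ 2 ∣ i * (x : ℤ) ^ j + k := by
  induction K using Finset.induction_on with
  | empty => exact ⟨d, h, hd, hdh, dvd_rfl, rfl, by simp⟩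
  | insert k K hkK ih =>
    obtain ⟨D, H, hD, hDH, hdD, hHh, hx⟩ := ih fun k hk => hK k (Finset.mem_insert_of_mem hk)
    obtain ⟨q, hq, hqPD, r, hqr, hr1, hr2⟩ := exists_simple_prime hi hj
      (hK k (Finset.mem_insert_self _ _)) (P := P * D) (by positivity)
    simp only [hq.dvd_mul, not_or] at hqPD
    obtain ⟨hqP, hqD⟩ := hqPD
    have hq2 : (0 : ℤ) < (q : ℤ) ^ 2 := by have := hq.pos; positivity
    obtain ⟨s, hs⟩ : ∃ s : ℕ, (s : ℤ) ≡ r [ZMOD (q : ℤ) ^ 2] :=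
      ⟨(r % (q : ℤ) ^ 2).toNat, by
        rw [Int.toNat_of_nonneg (Int.emod_nonneg _ hq2.ne')]; exact Int.mod_modEq _ _⟩
    have hqs : ¬ q ∣ s := fun h => hqr <| by
      have h1 : (s : ℤ) ≡ r [ZMOD q] := hs.of_dvd (dvd_pow_self _ two_ne_zero)
      exact h1.dvd_iff.1 (by exact_mod_cast h)
    have hcop : D.Coprime (q ^ 2) :=
      ((hq.coprime_iff_not_dvd.2 hqD).symm).pow_right 2
    obtain ⟨H', hH1, hH2⟩ := Nat.chineseRemainder hcop H s
    refine ⟨D * q ^ 2, H', by have := hq.pos; positivity, ?_, hdD.mul_right _,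
      (hH1.of_dvd hdD).trans hHh, fun x hxH k' hk' => ?_⟩
    · refine Nat.Coprime.mul_left ?_ (Nat.Coprime.pow_left 2 (hq.coprime_iff_not_dvd.2 fun h => hqs ?_))
      · unfold Nat.Coprime; rw [Nat.gcd_comm, hH1.gcd_eq, Nat.gcd_comm]; exact hDH
      · exact ((hH2.of_dvd (dvd_pow_self q two_ne_zero)).dvd_iff dvd_rfl).1 h
    · rcases Finset.mem_insert.1 hk' with rfl | hmem
      · have hxr : (x : ℤ) ≡ r [ZMOD (q : ℤ) ^ 2] := by
          refine Int.ModEq.trans ?_ hs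
          have := (hxH.of_dvd (dvd_mul_left _ _)).trans hH2
          exact_mod_cast Int.natCast_modEq_iff.2 this
        have hv : (i : ℤ) * (x : ℤ) ^ j + k' ≡ i * r ^ j + k' [ZMOD (q : ℤ) ^ 2] :=
          ((hxr.pow j).mul_left _).add_right _
        exact ⟨q, hq, hqP, (hv.of_dvd (dvd_pow_self _ two_ne_zero)).dvd_iff.2 hr1,
          fun h => hr2 (hv.dvd_iff.1 h)⟩
      · exact hx x ((hxH.of_dvd (dvd_mul_right _ _)).trans hH1) _ hmem

/-- The coefficient sequence of the series: its value at `N` is `a n` if `N = i * n ^ j` with `n ∈ S`,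
and `0` if `N` is not of this form. For `i ≥ 1` and `j ≥ 2` such an `n` is unique. -/
noncomputable def digit (S : Set ℕ) (a : ℕ → ℤ) (i j : ℕ) : ℕ → ℤ :=
  Function.extend (fun n : S => i * (n : ℕ) ^ j) (fun n => a n) 0

section digit
variable {S : Set ℕ} {a : ℕ → ℤ} {i j : ℕ}

lemma exponent_injective (hi : 1 ≤ i) (hj : 2 ≤ j) :
    Function.Injective fun n : S => i * (n : ℕ) ^ j := fun m n h =>
  Subtype.ext (Nat.pow_left_injective (by omega) (Nat.eq_of_mul_eq_mul_left hi h))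

lemma digit_exponent (hi : 1 ≤ i) (hj : 2 ≤ j) {n : ℕ} (hn : n ∈ S) :
    digit S a i j (i * n ^ j) = a n :=
  (exponent_injective hi hj).extend_apply _ _ (⟨n, hn⟩ : S)

lemma exists_of_digit_ne_zero {N : ℕ} (h : digit S a i j N ≠ 0) : ∃ n ∈ S, i * n ^ j = N := by
  by_contra hN
  exact h (Function.extend_apply' _ _ _ fun ⟨n, hn⟩ => hN ⟨n, n.2, hn⟩)

lemma exists_digit_bound (hi : 1 ≤ i) (hj : 2 ≤ j) (ha : ∃ C : ℤ, ∀ n ∈ S, |a n| ≤ C) :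
    ∃ B : ℤ, ∀ N, |digit S a i j N| ≤ B := by
  obtain ⟨C, hC⟩ := ha
  refine ⟨max C 0, fun N => ?_⟩
  by_cases h : digit S a i j N = 0
  · simp [h]
  · obtain ⟨n, hn, rfl⟩ := exists_of_digit_ne_zero h
    rw [digit_exponent hi hj hn]
    exact (hC n hn).trans (le_max_left _ _)

lemma tsum_digit (hi : 1 ≤ i) (hj : 2 ≤ j) (b : ℕ) :
    ∑' N, (digit S a i j N : ℝ) / (b : ℝ) ^ N
      = ∑' n : S, (a n : ℝ) / (b : ℝ) ^ (i * (n : ℕ) ^ j) := by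
  have hinj := exponent_injective (S := S) hi hj
  rw [← hinj.tsum_eq]
  · exact tsum_congr fun n => by rw [digit_exponent hi hj n.2]
  · intro N hN
    have : digit S a i j N ≠ 0 := fun h => hN (by simp [h])
    obtain ⟨n, hn, h⟩ := exists_of_digit_ne_zero this
    exact ⟨⟨n, hn⟩, h⟩

end digit

/-- **Theorem 1.** Let `b ≥ 2` be an integer. For each pair `(i,j)` with `i ≥ 1`, `j ≥ 2`,
let `d i j` and `h i j` be coprime positive integers, let `S i j` be a set of positive
integers containing every prime `p ≡ h i j (mod d i j)`, and let `a i j` be a bounded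
integer-valued function on `S i j` with all values nonzero. Then the set consisting of `1`
together with the numbers `∑_{n ∈ S i j} a i j n / b^(i·n^j)`, `(i,j) ∈ ℕ_{≥1} × ℕ_{≥2}`,
is linearly independent over `ℚ`. -/
theorem theorem1 (b : ℕ) (hb : 2 ≤ b)
    (d h : ℕ → ℕ → ℕ) (S : ℕ → ℕ → Set ℕ) (a : ℕ → ℕ → ℕ → ℤ)
    (hdh : ∀ i j, 1 ≤ i → 2 ≤ j →
      0 < d i j ∧ 0 < h i j ∧ Nat.Coprime (d i j) (h i j))
    (hSpos : ∀ i j, 1 ≤ i → 2 ≤ j → ∀ n ∈ S i j, 0 < n)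
    (hSprime : ∀ i j, 1 ≤ i → 2 ≤ j →
      ∀ p : ℕ, p.Prime → p % d i j = h i j % d i j → p ∈ S i j)
    (ha0 : ∀ i j, 1 ≤ i → 2 ≤ j → ∀ n ∈ S i j, a i j n ≠ 0)
    (haB : ∀ i j, 1 ≤ i → 2 ≤ j → ∃ C : ℤ, ∀ n ∈ S i j, |a i j n| ≤ C) :
    LinearIndependent ℚ (fun x : Option {p : ℕ × ℕ // 1 ≤ p.1 ∧ 2 ≤ p.2} =>
      x.elim (1 : ℝ) fun q =>
        ∑' n : S q.1.1 q.1.2,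
          (a q.1.1 q.1.2 n : ℝ) / (b : ℝ) ^ (q.1.1 * (n : ℕ) ^ q.1.2)) := by
  rw [← LinearIndependent.iff_fractionRing ℤ ℚ, linearIndependent_iff]
  intro g hg
  rw [Finsupp.linearCombination_option] at hg
  by_cases hF : g.some = 0
  · have h0 : g none = 0 := by simpa [hF] using hg
    ext (_ | q)
    · exact h0
    · exact DFunLike.congr_fun hF q
  exfalso
  set c := g.some with hc
  obtain ⟨⟨⟨i₀, j₀⟩, hi₀, hj₀⟩, hq₀F, hmin⟩ := c.support.exists_min_image
    (fun q => toLex (q.1.2, q.1.1)) (Finsupp.support_nonempty_iff.2 hF)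
  simp only at hi₀ hj₀
  set q₀ : {p : ℕ × ℕ // 1 ≤ p.1 ∧ 2 ≤ p.2} := ⟨(i₀, j₀), hi₀, hj₀⟩ with hq₀
  let δ : {p : ℕ × ℕ // 1 ≤ p.1 ∧ 2 ≤ p.2} → ℕ → ℤ := fun q =>
    digit (S q.1.1 q.1.2) (a q.1.1 q.1.2) q.1.1 q.1.2
  choose B hB using fun q : {p : ℕ × ℕ // 1 ≤ p.1 ∧ 2 ≤ p.2} =>
    exists_digit_bound (S := S q.1.1 q.1.2) (a := a q.1.1 q.1.2) q.2.1 q.2.2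
      (haB q.1.1 q.1.2 q.2.1 q.2.2)
  let A : ℕ → ℤ := fun N => ∑ q ∈ c.support, c q * δ q N
  set C : ℤ := ∑ q ∈ c.support, |c q| * B q with hC
  have hA : ∀ N, |A N| ≤ C := fun N => by
    refine (Finset.abs_sum_le_sum_abs _ _).trans (Finset.sum_le_sum fun q _ => ?_)
    rw [abs_mul]
    exact mul_le_mul_of_nonneg_left (hB q N) (abs_nonneg _)
  have hsum : ∑' N, (A N : ℝ) / (b : ℝ) ^ N = ((-g none : ℤ) : ℝ) := by
    have h1 : ∀ N, (A N : ℝ) / (b : ℝ) ^ N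
        = ∑ q ∈ c.support, (c q : ℝ) * ((δ q N : ℝ) / (b : ℝ) ^ N) := fun N => by
      simp only [A]
      push_cast
      rw [Finset.sum_div]
      exact Finset.sum_congr rfl fun q _ => mul_div_assoc _ _ _
    simp_rw [h1]
    rw [Summable.tsum_finsetSum fun q _ => (summable_digits hb (hB q)).mul_left _]
    rw [Finsupp.linearCombination_apply, Finsupp.sum] at hg
    simp only [Option.elim_none, Function.comp_apply, Option.elim_some, zsmul_eq_mul, mul_one] at hg
    rw [Int.cast_neg, eq_neg_iff_add_eq_zero, add_comm, ← hg]
    congr 1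
    refine Finset.sum_congr rfl fun q _ => ?_
    rw [tsum_mul_left, tsum_digit q.2.1 q.2.2]
  obtain ⟨L, hL⟩ : ∃ L : ℕ, C + 2 ≤ (b : ℤ) ^ L := by
    refine ⟨(C + 2).toNat, (Int.self_le_toNat _).trans ?_⟩
    exact_mod_cast (Nat.lt_pow_self (by omega)).le
  set P : ℕ := ∏ q ∈ c.support, q.1.1 with hP
  have hP0 : 0 < P := Finset.prod_pos fun q _ => q.2.1
  have hqP : ∀ q ∈ c.support, q.1.1 ∣ P := fun q hq => Finset.dvd_prod_of_mem _ hq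
  obtain ⟨hd, -, hdh⟩ := hdh i₀ j₀ hi₀ hj₀
  obtain ⟨D, H, hD, hDH, hdD, hHh, hDK⟩ := exists_isolating_progression hi₀ hj₀ hd hdh hP0
    ((Finset.Icc (-L : ℤ) L).erase 0) fun k hk => Finset.ne_of_mem_erase hk
  obtain ⟨p, hpgt, hp, hpH⟩ := Nat.forall_exists_prime_gt_and_modEq (P + L) hD.ne' hDH.symm
  have hpS : p ∈ S i₀ j₀ := hSprime i₀ j₀ hi₀ hj₀ p hp ((hpH.of_dvd hdD).trans hHh)
  have hpi : ∀ q ∈ c.support, ¬ p ∣ q.1.1 := fun q hq hpq => by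
    have := Nat.le_of_dvd hP0 (hpq.trans (hqP q hq))
    omega
  -- Other pairs of the support contribute nothing at `i₀ * p ^ j₀`.
  have hother : ∀ q ∈ c.support, q ≠ q₀ → δ q (i₀ * p ^ j₀) = 0 := fun q hq hne => by
    by_contra hδ
    obtain ⟨n, hn, hnN⟩ := exists_of_digit_ne_zero hδ
    have hle := hmin q hq
    obtain ⟨⟨i, j⟩, hi, hj⟩ := q
    simp only [hq₀, Prod.Lex.toLex_le_toLex] at hi hj hn hnN hle
    have hpn : p ∣ n := by
      have h1 : p ∣ i * n ^ j := hnN ▸ Dvd.dvd.mul_left (dvd_pow_self _ (by omega)) _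
      exact hp.dvd_of_dvd_pow ((hp.dvd_mul.1 h1).resolve_left (hpi _ hq))
    obtain ⟨m, rfl⟩ := hpn
    rcases hle with hlt | ⟨rfl, hle⟩
    · obtain ⟨e, rfl⟩ := Nat.exists_eq_add_of_lt hlt
      refine hpi _ hq₀F ?_
      have : i₀ = p * (i * m ^ (j₀ + e + 1) * p ^ e) := by
        refine Nat.eq_of_mul_eq_mul_right (pow_pos hp.pos j₀) (hnN.symm.trans ?_)
        ring
      exact Dvd.intro _ this.symm
    · have h1 : i * m ^ j₀ = i₀ := by
        refine Nat.eq_of_mul_eq_mul_right (pow_pos hp.pos j₀) (Eq.trans ?_ hnN)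
        ring
      have hm : 0 < m := Nat.pos_of_mul_pos_left (hSpos i j₀ hi hj _ hn)
      have h2 : i ≤ i₀ := h1 ▸ Nat.le_mul_of_pos_right i (pow_pos hm j₀)
      exact hne (Subtype.ext (Prod.ext (le_antisymm h2 hle) rfl))
  refine no_isolated_digit hb hA hsum hL (N₀ := i₀ * p ^ j₀) ?_ ?_ ?_
  · calc L ≤ p := by omega
      _ ≤ p ^ j₀ := Nat.le_self_pow (by omega) p
      _ ≤ i₀ * p ^ j₀ := Nat.le_mul_of_pos_left _ hi₀
  · have : A (i₀ * p ^ j₀) = c q₀ * a i₀ j₀ p := by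
      simp only [A]
      rw [Finset.sum_eq_single_of_mem q₀ hq₀F fun q hq hne => by rw [hother q hq hne, mul_zero]]
      congr 1
      exact digit_exponent hi₀ hj₀ hpS
    rw [this]
    exact mul_ne_zero (Finsupp.mem_support_iff.1 hq₀F) (ha0 i₀ j₀ hi₀ hj₀ p hpS)
  · intro N hN h1 h2
    refine Finset.sum_eq_zero fun q hq => mul_eq_zero_of_right _ ?_
    by_contra hδ
    obtain ⟨n, hn, rfl⟩ := exists_of_digit_ne_zero hδ
    obtain ⟨r, hr, hrP, hr1, hr2⟩ := hDK p hpH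
      ((q.1.1 * n ^ q.1.2 : ℕ) - (i₀ * p ^ j₀ : ℕ) : ℤ) (by
        rw [Finset.mem_erase, Finset.mem_Icc]
        refine ⟨?_, ?_, ?_⟩ <;> omega)
    have hval : (i₀ : ℤ) * (p : ℤ) ^ j₀ + ((q.1.1 * n ^ q.1.2 : ℕ) - (i₀ * p ^ j₀ : ℕ) : ℤ)
        = (q.1.1 * n ^ q.1.2 : ℕ) := by push_cast; ring
    rw [hval] at hr1 hr2
    have hr1 : r ∣ q.1.1 * n ^ q.1.2 := by exact_mod_cast hr1
    have hrn : r ∣ n := hr.dvd_of_dvd_pow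
      ((hr.dvd_mul.1 hr1).resolve_left fun h => hrP (h.trans (hqP q hq)))
    have : r ^ 2 ∣ q.1.1 * n ^ q.1.2 :=
      Dvd.dvd.mul_left ((pow_dvd_pow_of_dvd hrn 2).trans (pow_dvd_pow n q.2.2)) _
    exact hr2 (by exact_mod_cast this)
end

section
/- Let b ≥ 2 be an integer. Then the set consisting of the number 1 together with all the numbers α_{i,j} := Σ_{n=1}^∞ 1/b^{i·n^j}, for integers i ≥ 1 and j ≥ 2, is linearly independent over ℚ. -/
/-!
Suppose an integer relation `c₀ + ∑ c_{i,j} α_{i,j} = 0` holds, with finite support `S` in the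
pairs `(i, j)`. Collecting powers of `1 / b` turns it into `∑ a(m) b^{-m} ∈ ℤ`, where `a(m)` is
the sum of the `c_{i,j}` over those `(i, j) ∈ S` for which `m` has the form `i n^j`, `n ≥ 1`.
The sequence `a` is bounded.

*Digits.* The shifted tails `T N = ∑ₖ a(N + k) b^{-k}` are bounded integers with
`T (N + 1) = b (T N - a N)` (`exists_integer_tails`). If `a` vanishes on a long enough window
starting at `N`, then `T` would be multiplied by a large power of `b` along the window, so
`T N = 0`. Hence a digit `a m₀` isolated by long windows of zeros on both sides is itself zero
(`digit_eq_zero_of_isolated`).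

*Isolated values.* It remains to find `m₀ = i₀ n^{j₀}` with `a m₀ = c_{i₀,j₀}` and with no other
value `i n'^j`, `(i, j) ∈ S`, within distance `L` (`exists_isolated_value`). For each
`0 < |h| ≤ L` there is a large prime `p` and a residue class of `n` modulo `p²` on which `p`
divides `i₀ n^{j₀} + h` exactly once (`exists_prime_exactly_dvd`); since `p ∤ i` and `j ≥ 2`, such
a number is not of the form `i n'^j`. The Chinese remainder theorem treats all `h` at once
(`exists_residue_class`), and Dirichlet's theorem lets `n` be a large prime. If `(i₀, j₀)` is a
minimal element of `S` for the product order, the primality of `n` shows that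
`i n'^j = i₀ n^{j₀}` forces `i ∣ i₀` and `j ≤ j₀`, hence `(i, j) = (i₀, j₀)`.
-/

/-- A bounded integer solution `T` of `T (N + 1) = b (T N - a N)` grows like `b ^ l` along a run of
zeros of `a`, so it vanishes where a run of length `L` with `2 ^ L > K` begins. Applied to the runs
just before and just after `m`, this gives `T m = T (m + 1) = 0` and so `a m = 0`. -/
theorem digit_eq_zero_of_isolated {b : ℕ} (hb : 2 ≤ b) {a T : ℕ → ℤ} {K : ℤ}
    (hT : ∀ N, T (N + 1) = b * (T N - a N)) (hK : ∀ N, |T N| ≤ K) {L : ℕ} (hL : K < 2 ^ L)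
    {m : ℕ} (hm : L ≤ m) (h0 : ∀ k, k ≠ m → m ≤ k + L → k ≤ m + L → a k = 0) : a m = 0 := by
  have run : ∀ N, (∀ k, N ≤ k → k < N + L → a k = 0) → ∀ l ≤ L, T (N + l) = b ^ l * T N := by
    intro N hN l
    induction l with
    | zero => simp
    | succ l ih =>
      intro hl
      rw [← add_assoc, hT, ih (by omega), hN (N + l) (by omega) (by omega)]
      ring
  have zero : ∀ N, (∀ k, N ≤ k → k < N + L → a k = 0) → T N = 0 := by
    intro N hN
    by_contra hne
    have h1 := hK (N + L)
    rw [run N hN L le_rfl, abs_mul, abs_of_nonneg (by positivity)] at h1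
    have h2 : (1 : ℤ) ≤ |T N| := Int.one_le_abs hne
    have h3 : (2 : ℤ) ^ L ≤ (b : ℤ) ^ L := pow_le_pow_left₀ (by norm_num) (by exact_mod_cast hb) L
    nlinarith [mul_le_mul h3 h2 (by norm_num) (by positivity)]
  have before : ∀ k, m - L ≤ k → k < m - L + L → a k = 0 := fun k hk hk' =>
    h0 k (by omega) (by omega) (by omega)
  have h1 : T m = 0 := by
    have := run (m - L) before L le_rfl
    rwa [zero _ before, Nat.sub_add_cancel hm, mul_zero] at this
  have h2 : T (m + 1) = 0 := zero _ fun k hk hk' => h0 k (by omega) (by omega) (by omega)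
  have h3 := hT m
  rw [h1, h2, zero_sub] at h3
  have hb0 : (b : ℤ) ≠ 0 := by positivity
  rcases mul_eq_zero.mp h3.symm with h | h
  · exact absurd h hb0
  · simpa using h

/-- If the bounded digits `a` sum to an integer in base `b`, the tails `∑ₖ a(N + k) b^{-k}` are
bounded integers, linked by the recursion of a base-`b` expansion. -/
theorem exists_integer_tails {b : ℕ} (hb : 2 ≤ b) {a : ℕ → ℤ} {C : ℤ} (hC : ∀ m, |a m| ≤ C)
    {c : ℤ} (hc : ∑' m, (a m : ℝ) * (1 / (b : ℝ)) ^ m = c) :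
    ∃ (T : ℕ → ℤ) (K : ℤ), (∀ N, T (N + 1) = b * (T N - a N)) ∧ ∀ N, |T N| ≤ K := by
  have hb' : (2 : ℝ) ≤ b := by exact_mod_cast hb
  have hr0 : 0 ≤ 1 / (b : ℝ) := by positivity
  have hr1 : 1 / (b : ℝ) < 1 := by rw [div_lt_one (by linarith)]; linarith
  have hgeo := (summable_geometric_of_lt_one hr0 hr1).mul_left (C : ℝ)
  have hle : ∀ N k, ‖(a (N + k) : ℝ) * (1 / (b : ℝ)) ^ k‖ ≤ C * (1 / (b : ℝ)) ^ k := by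
    intro N k
    rw [norm_mul, norm_pow, Real.norm_of_nonneg hr0, Real.norm_eq_abs]
    gcongr
    exact_mod_cast hC _
  have hsum : ∀ N, Summable fun k => (a (N + k) : ℝ) * (1 / (b : ℝ)) ^ k := fun N =>
    Summable.of_norm_bounded hgeo (hle N)
  let R : ℕ → ℝ := fun N => ∑' k, (a (N + k) : ℝ) * (1 / (b : ℝ)) ^ k
  have hR : ∀ N, R (N + 1) = b * (R N - a N) := by
    intro N
    have h := (hsum N).tsum_eq_zero_add
    have h' : ∑' k, (a (N + (k + 1)) : ℝ) * (1 / (b : ℝ)) ^ (k + 1) = 1 / b * R (N + 1) := by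
      rw [← tsum_mul_left]
      refine tsum_congr fun k => ?_
      rw [show N + (k + 1) = N + 1 + k by ring]
      ring
    rw [h'] at h
    change R N = _ at h
    rw [h]
    simp
    field_simp
  let T : ℕ → ℤ := fun N => Nat.rec (motive := fun _ => ℤ) c (fun n t => b * (t - a n)) N
  have hT : ∀ N, T (N + 1) = b * (T N - a N) := fun N => rfl
  have hTR : ∀ N, (T N : ℝ) = R N := by
    intro N
    induction N with
    | zero => simpa [R] using (show ((T 0 : ℤ) : ℝ) = _ from hc.symm)
    | succ N ih => rw [hT, hR, ← ih]; push_cast; ring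
  refine ⟨T, ⌈∑' k, (C : ℝ) * (1 / (b : ℝ)) ^ k⌉, hT, fun N => ?_⟩
  have h : |R N| ≤ ∑' k, (C : ℝ) * (1 / (b : ℝ)) ^ k :=
    tsum_of_norm_bounded hgeo.hasSum (hle N)
  rw [← hTR] at h
  exact_mod_cast h.trans (Int.le_ceil _)

/-- The polynomial `i x ^ j + h` with `h ≠ 0` takes, for some arbitrarily large prime `p`, a value
divisible by `p` but not by `p ^ 2`. A root modulo `p` comes from Euclid's argument, and it is simple
because `p ∤ i j h`, so either it or its translate by `p` is not a root modulo `p ^ 2`. -/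
theorem exists_prime_exactly_dvd (B : ℕ) {i j : ℕ} (hi : 1 ≤ i) (hj : 1 ≤ j) {h : ℤ} (hh : h ≠ 0) :
    ∃ p : ℕ, p.Prime ∧ B < p ∧ ¬ (p : ℤ) ∣ h ∧ ∃ x : ℕ, (p : ℤ) ∣ i * (x : ℤ) ^ j + h ∧
      ¬ (p : ℤ) ^ 2 ∣ i * (x : ℤ) ^ j + h := by
  set D := B + i + j + h.natAbs + 3 with hD
  obtain ⟨j, rfl⟩ : ∃ j', j = j' + 1 := ⟨j - 1, by omega⟩
  have hpos : 0 < h.natAbs := Int.natAbs_pos.mpr hh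
  -- With `x = |h| D!` one has `i x ^ (j + 1) + h = |h| u`, and `u ≡ ±1` modulo each prime `≤ D`.
  set u : ℤ := i * (h.natAbs : ℤ) ^ j * (D.factorial : ℤ) ^ (j + 1) + h.sign with hu
  have hfac : 3 ≤ D.factorial := (by omega : 3 ≤ D).trans (Nat.self_le_factorial D)
  have hbig : (3 : ℤ) ≤ i * (h.natAbs : ℤ) ^ j * (D.factorial : ℤ) ^ (j + 1) := by
    have h1 : 1 ≤ i * h.natAbs ^ j := Nat.mul_pos hi (pow_pos hpos j)
    have h2 : D.factorial ≤ D.factorial ^ (j + 1) := Nat.le_self_pow (by omega) _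
    exact_mod_cast (hfac.trans h2).trans (Nat.le_mul_of_pos_left _ h1)
  have hsign : -1 ≤ h.sign := by
    rcases lt_or_gt_of_ne hh with h' | h'
    · rw [Int.sign_eq_neg_one_of_neg h']
    · rw [Int.sign_eq_one_of_pos h']; norm_num
  have hu1 : u.natAbs ≠ 1 := by omega
  obtain ⟨p, hp, hpu⟩ := Nat.exists_prime_and_dvd hu1
  have hpu : (p : ℤ) ∣ u := Int.natCast_dvd.mpr hpu
  have hpD : D < p := by
    by_contra! hle
    have h1 : (p : ℤ) ∣ (D.factorial : ℤ) := by
      exact_mod_cast hp.dvd_factorial.mpr hle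
    have h2 : (p : ℤ) ∣ h.sign :=
      (dvd_add_right ((h1.pow (by omega)).mul_left _ )).mp hpu
    have h3 := Int.natAbs_dvd_natAbs.mpr h2
    rw [Int.natAbs_sign_of_ne_zero hh] at h3
    exact hp.one_lt.ne' (by simpa using h3)
  have hnd : ∀ k : ℕ, 0 < k → k ≤ D → ¬ (p : ℤ) ∣ k := fun k hk hkD hd =>
    absurd (Nat.le_of_dvd hk (by exact_mod_cast hd)) (by omega)
  have hph : ¬ (p : ℤ) ∣ h := fun hd => hnd h.natAbs hpos (by omega) (Int.dvd_natAbs.mpr hd)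
  refine ⟨p, hp, by omega, hph, ?_⟩
  set x := h.natAbs * D.factorial with hx
  have hfx : (p : ℤ) ∣ i * (x : ℤ) ^ (j + 1) + h := by
    have : i * (x : ℤ) ^ (j + 1) + h = h.natAbs * u := by
      rw [hu, mul_add, mul_comm _ h.sign, Int.sign_mul_natAbs, hx]
      push_cast
      ring
    rw [this]
    exact hpu.mul_left _
  have hpI : Prime (p : ℤ) := Nat.prime_iff_prime_int.mp hp
  by_cases h2 : (p : ℤ) ^ 2 ∣ i * (x : ℤ) ^ (j + 1) + h
  · have key : ¬ (p : ℤ) ^ 2 ∣ i * ((x + p : ℕ) : ℤ) ^ (j + 1) + h := by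
      intro h3
      obtain ⟨k, hk⟩ := Polynomial.powAddExpansion (x : ℤ) (p : ℤ) (j + 1)
      have h4 := dvd_sub h3 h2
      -- First-order Taylor expansion: the difference is `p` times the derivative at `x`, modulo `p ^ 2`.
      have h5 : (i * ((x + p : ℕ) : ℤ) ^ (j + 1) + h) - (i * (x : ℤ) ^ (j + 1) + h) =
          p * (i * ((j + 1 : ℕ) * (x : ℤ) ^ j)) + p ^ 2 * (i * k) := by
        push_cast at hk ⊢
        rw [hk]
        ring
      rw [h5] at h4
      have h6 := (dvd_add_left (Dvd.intro _ rfl)).mp h4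
      rw [pow_two] at h6
      have h7 := Int.dvd_of_mul_dvd_mul_left (by exact_mod_cast hp.ne_zero) h6
      rcases hpI.dvd_or_dvd h7 with h8 | h8
      · exact hnd i hi (by omega) h8
      rcases hpI.dvd_or_dvd h8 with h9 | h9
      · exact hnd (j + 1) (by omega) (by omega) h9
      have h10 : (p : ℤ) ∣ x := hpI.dvd_of_dvd_pow h9
      exact hph ((dvd_add_right ((h10.pow (by omega)).mul_left _)).mp hfx)
    refine ⟨x + p, ?_, key⟩
    have : (i * ((x + p : ℕ) : ℤ) ^ (j + 1)) ≡ i * (x : ℤ) ^ (j + 1) [ZMOD p] := by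
      refine Int.ModEq.mul_left _ (Int.ModEq.pow _ ?_)
      push_cast
      simp [Int.ModEq]
    exact ((this.add_right h).dvd_iff).mpr hfx
  · exact ⟨x, hfx, h2⟩

/-- Simultaneous version of `exists_prime_exactly_dvd` for finitely many shifts `h`. Coprimality of
`c` and `M` is what makes Dirichlet's theorem applicable to the resulting class. -/
theorem exists_residue_class (B : ℕ) {i j : ℕ} (hi : 1 ≤ i) (hj : 1 ≤ j) (H : Finset ℤ)
    (hH : ∀ h ∈ H, h ≠ 0) :
    ∃ M c : ℕ, M ≠ 0 ∧ c.Coprime M ∧ ∀ n : ℕ, n ≡ c [MOD M] → ∀ h ∈ H,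
      ∃ p : ℕ, p.Prime ∧ B < p ∧ (p : ℤ) ∣ i * (n : ℤ) ^ j + h ∧
        ¬ (p : ℤ) ^ 2 ∣ i * (n : ℤ) ^ j + h := by
  induction H using Finset.induction_on with
  | empty => exact ⟨1, 0, one_ne_zero, by simp, by simp⟩
  | insert h H _ ih =>
    obtain ⟨M, c, hM, hcM, hc⟩ := ih fun k hk => hH k (Finset.mem_insert_of_mem hk)
    -- Taking `p > B + M` makes the new modulus `p ^ 2` coprime to `M`.
    obtain ⟨p, hp, hpB, hph, x, hx1, hx2⟩ :=
      exists_prime_exactly_dvd (B + M) hi hj (hH h (Finset.mem_insert_self h H))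
    have hpM : Nat.Coprime (p ^ 2) M := Nat.Coprime.pow_left 2 <|
      (Nat.Prime.coprime_iff_not_dvd hp).mpr fun hd =>
        absurd (Nat.le_of_dvd (Nat.pos_of_ne_zero hM) hd) (by omega)
    have hpx : Nat.Coprime x (p ^ 2) := Nat.Coprime.pow_right 2 <| Nat.Coprime.symm <|
      (Nat.Prime.coprime_iff_not_dvd hp).mpr fun hd => hph <| by
        have hd' : (p : ℤ) ∣ x := by exact_mod_cast hd
        exact (dvd_add_right ((hd'.pow (by omega)).mul_left _)).mp hx1
    obtain ⟨y, hy1, hy2⟩ := Nat.chineseRemainder hpM x c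
    refine ⟨p ^ 2 * M, y, by have := hp.ne_zero; positivity, Nat.Coprime.mul_right ?_ ?_, ?_⟩
    · rw [Nat.Coprime, hy1.gcd_eq]; exact hpx
    · rw [Nat.Coprime, hy2.gcd_eq]; exact hcM
    · intro n hn h' hh'
      rcases Finset.mem_insert.mp hh' with rfl | hh'
      · have hnx : (n : ℤ) ≡ x [ZMOD (p : ℤ) ^ 2] := by
          exact_mod_cast Int.natCast_modEq_iff.mpr ((hn.of_mul_right M).trans hy1)
        have hval := ((hnx.pow j).mul_left (i : ℤ)).add_right h'
        refine ⟨p, hp, by omega, ?_, fun hd => hx2 (hval.dvd_iff.mp hd)⟩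
        exact ((hval.of_dvd (dvd_pow_self _ two_ne_zero)).dvd_iff).mpr hx1
      · obtain ⟨q, hq, hqB, hq'⟩ := hc n ((hn.of_mul_left (p ^ 2)).trans hy2) h' hh'
        exact ⟨q, hq, hqB, hq'⟩


/-- A nonempty finite family of sequences `i n ^ j` has a value `m₀` which belongs to only one of
the sequences and is at distance more than `L` from all their other values. -/
theorem exists_isolated_value {S : Finset {p : ℕ × ℕ // 1 ≤ p.1 ∧ 2 ≤ p.2}} (hS : S.Nonempty)
    (L : ℕ) :
    ∃ q₀ ∈ S, ∃ m₀, L ≤ m₀ ∧ (∃ n, q₀.1.1 * (n + 1) ^ q₀.1.2 = m₀) ∧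
      ∀ q ∈ S, ∀ k n, m₀ ≤ k + L → k ≤ m₀ + L → q.1.1 * (n + 1) ^ q.1.2 = k →
        k = m₀ ∧ q = q₀ := by
  obtain ⟨q₀, hq₀⟩ := Finset.exists_minimal hS
  set B := L + ∑ q ∈ S, q.1.1 with hB
  have hle : ∀ q ∈ S, q.1.1 ≤ B := fun q hq =>
    (Finset.single_le_sum (f := fun q => q.1.1) (fun _ _ => Nat.zero_le _) hq).trans
      (Nat.le_add_left _ _)
  have hi₀ := q₀.2.1
  have hj₀ := q₀.2.2
  obtain ⟨M, c, hM, hcM, hc⟩ := exists_residue_class B (i := q₀.1.1) (j := q₀.1.2) q₀.2.1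
    (by omega) ((Finset.Icc (-(L : ℤ)) L).erase 0) fun h hh => Finset.ne_of_mem_erase hh
  obtain ⟨n₀, hn₀B, hn₀, hn₀c⟩ := Nat.forall_exists_prime_gt_and_modEq B hM hcM
  have hcop : ∀ q ∈ S, n₀.Coprime q.1.1 := fun q hq =>
    (Nat.Prime.coprime_iff_not_dvd hn₀).mpr fun hd =>
      absurd ((Nat.le_of_dvd q.2.1 hd).trans (hle q hq)) (by omega)
  refine ⟨q₀, hq₀.prop, q₀.1.1 * n₀ ^ q₀.1.2, ?_, ⟨n₀ - 1, ?_⟩, ?_⟩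
  · have h1 : n₀ ≤ n₀ ^ q₀.1.2 := Nat.le_self_pow (by omega) _
    have h2 : n₀ ^ q₀.1.2 ≤ q₀.1.1 * n₀ ^ q₀.1.2 := Nat.le_mul_of_pos_left _ hi₀
    omega
  · rw [Nat.sub_add_cancel hn₀.one_le]
  intro q hq k n hk1 hk2 hk
  have hj := q.2.2
  -- At a distance `h ≠ 0` from `m₀`, some prime not dividing `i` divides `k = i (n + 1) ^ j` exactly
  -- once, against `2 ≤ j`.
  have hkm : k = q₀.1.1 * n₀ ^ q₀.1.2 := by
    by_contra hne
    obtain ⟨p, hp, hpB, hd, hd2⟩ := hc n₀ hn₀c ((k : ℤ) - (q₀.1.1 * n₀ ^ q₀.1.2 : ℕ)) <| by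
      rw [Finset.mem_erase, Finset.mem_Icc]
      omega
    have hval : (q₀.1.1 * (n₀ : ℤ) ^ q₀.1.2 + ((k : ℤ) - (q₀.1.1 * n₀ ^ q₀.1.2 : ℕ))) = (k : ℕ) := by
      push_cast
      ring
    rw [hval] at hd hd2
    have hd' : p ∣ k := by exact_mod_cast hd
    refine hd2 ?_
    rw [← hk] at hd' ⊢
    rcases hp.dvd_mul.mp hd' with h | h
    · exact absurd ((Nat.le_of_dvd q.2.1 h).trans (hle q hq)) (by omega)
    · have h1 : p ^ 2 ∣ (n + 1) ^ q.1.2 :=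
        (pow_dvd_pow_of_dvd (hp.dvd_of_dvd_pow h) 2).trans (pow_dvd_pow _ hj)
      exact_mod_cast h1.mul_left q.1.1
  refine ⟨hkm, ?_⟩
  rw [hkm] at hk
  have h1 : q.1.1 ∣ q₀.1.1 :=
    Nat.Coprime.dvd_of_dvd_mul_right ((hcop q hq).pow_left _).symm (hk ▸ Nat.dvd_mul_right _ _)
  have h2 : n₀ ∣ n + 1 := by
    have h3 : n₀ ∣ q.1.1 * (n + 1) ^ q.1.2 :=
      hk ▸ (dvd_pow_self n₀ (by omega)).mul_left _
    exact hn₀.dvd_of_dvd_pow ((hcop q hq).dvd_of_dvd_mul_left h3)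
  have h4 : n₀ ^ q.1.2 ∣ n₀ ^ q₀.1.2 := by
    refine Nat.Coprime.dvd_of_dvd_mul_left ((hcop q₀ hq₀.prop).pow_left _) ?_
    rw [← hk]
    exact (pow_dvd_pow_of_dvd h2 _).mul_left _
  have hqle : q ≤ q₀ :=
    ⟨Nat.le_of_dvd hi₀ h1, (Nat.pow_dvd_pow_iff_le_right hn₀.one_lt).mp h4⟩
  exact le_antisymm hqle (hq₀.le_of_le hq hqle)


/-- **Corollary 2 (first part).** Let `b ≥ 2` be an integer. Then the set consisting of the
number `1` together with all the numbers `α_{i,j} = ∑_{n=1}^∞ 1/b^(i·n^j)` for integers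
`i ≥ 1`, `j ≥ 2`, is linearly independent over `ℚ`. -/
theorem corollary2_first (b : ℕ) (hb : 2 ≤ b) :
    LinearIndependent ℚ (fun x : Option {p : ℕ × ℕ // 1 ≤ p.1 ∧ 2 ≤ p.2} =>
      x.elim (1 : ℝ) fun q =>
        ∑' n : ℕ, 1 / (b : ℝ) ^ (q.1.1 * (n + 1) ^ q.1.2)) := by
  classical
  rw [← LinearIndependent.iff_fractionRing ℤ ℚ, linearIndependent_iff]
  intro l hl
  set e : {p : ℕ × ℕ // 1 ≤ p.1 ∧ 2 ≤ p.2} → ℕ → ℕ := fun q n => q.1.1 * (n + 1) ^ q.1.2 with he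
  have hb' : (2 : ℝ) ≤ b := by exact_mod_cast hb
  have hr0 : 0 ≤ 1 / (b : ℝ) := by positivity
  have hr1 : 1 / (b : ℝ) < 1 := by rw [div_lt_one (by linarith)]; linarith
  have hgeo := summable_geometric_of_lt_one hr0 hr1
  have hinj : ∀ q, Function.Injective (e q) := by
    intro q n n' h
    have h1 := Nat.eq_of_mul_eq_mul_left q.2.1 h
    have hj := q.2.2
    have h2 := Nat.pow_left_injective (n := q.1.2) (by omega) h1
    simpa using h2
  -- Indicator functions of the sets of values, used to write each series as a sum over exponents.
  let ind : {p : ℕ × ℕ // 1 ≤ p.1 ∧ 2 ≤ p.2} → ℕ → ℤ :=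
    fun q m => if m ∈ Set.range (e q) then 1 else 0
  have hind : ∀ q m, |ind q m| ≤ 1 := by
    intro q m
    simp only [ind]
    split_ifs <;> simp
  have hind0 : ∀ q m, m ∉ Set.range (e q) → ind q m = 0 := fun q m h => if_neg h
  have hα : ∀ q, ∑' n : ℕ, 1 / (b : ℝ) ^ (e q n) = ∑' m, (ind q m : ℝ) * (1 / (b : ℝ)) ^ m := by
    intro q
    rw [← (hinj q).tsum_eq (f := fun m => (ind q m : ℝ) * (1 / (b : ℝ)) ^ m)]
    · exact tsum_congr fun n => by simp [ind]
    · intro m hm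
      by_contra hm'
      exact hm (by simp [hind0 q m hm'])
  have hsum : ∀ q, Summable fun m => (ind q m : ℝ) * (1 / (b : ℝ)) ^ m := by
    intro q
    refine Summable.of_norm_bounded hgeo fun m => ?_
    rw [norm_mul, norm_pow, Real.norm_of_nonneg hr0, Real.norm_eq_abs]
    have : |(ind q m : ℝ)| ≤ 1 := by exact_mod_cast hind q m
    exact mul_le_of_le_one_left (by positivity) this
  rw [Finsupp.linearCombination_option] at hl
  simp only [Option.elim_none, Function.comp_def, Option.elim_some] at hl
  set S := l.some.support with hS
  let a : ℕ → ℤ := fun m => ∑ q ∈ S, l.some q * ind q m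
  have ha : ∑' m, (a m : ℝ) * (1 / (b : ℝ)) ^ m = ((-l none : ℤ) : ℝ) := by
    have h1 : ∑' m, (a m : ℝ) * (1 / (b : ℝ)) ^ m =
        ∑ q ∈ S, (l.some q : ℝ) * ∑' m, (ind q m : ℝ) * (1 / (b : ℝ)) ^ m := by
      simp_rw [← tsum_mul_left]
      rw [← Summable.tsum_finsetSum fun q _ => (hsum q).mul_left _]
      refine tsum_congr fun m => ?_
      simp only [a]
      push_cast
      rw [Finset.sum_mul]
      exact Finset.sum_congr rfl fun q _ => by ring
    rw [h1]
    simp_rw [← hα]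
    rw [Finsupp.linearCombination_apply, Finsupp.sum] at hl
    simp only [zsmul_eq_mul, mul_one] at hl
    push_cast
    linarith
  have haC : ∀ m, |a m| ≤ ∑ q ∈ S, |l.some q| := fun m =>
    (Finset.abs_sum_le_sum_abs _ _).trans <| Finset.sum_le_sum fun q _ => by
      rw [abs_mul]
      exact mul_le_of_le_one_right (abs_nonneg _) (hind q m)
  have hSe : S = ∅ := by
    by_contra hne
    obtain ⟨T, K, hT, hK⟩ := exists_integer_tails hb haC ha
    obtain ⟨L, hL⟩ := pow_unbounded_of_one_lt K (by norm_num : (1 : ℤ) < 2)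
    obtain ⟨q₀, hq₀, m₀, hLm, hm₀, hiso⟩ :=
      exists_isolated_value (Finset.nonempty_iff_ne_empty.mpr hne) L
    have h0 : a m₀ = 0 := by
      refine digit_eq_zero_of_isolated hb hT hK hL hLm fun k hk hk1 hk2 => ?_
      refine Finset.sum_eq_zero fun q hq => ?_
      have : k ∉ Set.range (e q) := fun ⟨n, hn⟩ => hk (hiso q hq k n hk1 hk2 hn).1
      rw [hind0 q k this, mul_zero]
    have h1 : a m₀ = l.some q₀ := by
      have h2 : ind q₀ m₀ = 1 := if_pos hm₀
      simp only [a]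
      rw [Finset.sum_eq_single_of_mem q₀ hq₀, h2, mul_one]
      intro q hq hqne
      have : m₀ ∉ Set.range (e q) := fun ⟨n, hn⟩ =>
        hqne (hiso q hq m₀ n (by omega) (by omega) hn).2
      rw [hind0 q m₀ this, mul_zero]
    exact Finsupp.mem_support_iff.mp hq₀ (h1 ▸ h0)
  have hsome : l.some = 0 := Finsupp.support_eq_empty.mp hSe
  rw [hsome] at hl
  ext x
  cases x with
  | none => simpa using hl
  | some q => exact DFunLike.congr_fun hsome q
end

section
/- Let b ≥ 2 be an integer. Then the set consisting of the number 1 together with all the numbers β_{i,j} := Σ_{n=1}^∞ (-1)^n/b^{i·n^j}, for integers i ≥ 1 and j ≥ 2, is linearly independent over ℚ. -/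
/-!
After clearing denominators, a linear relation reads `c₀ + ∑ₘ a(m) / b ^ m = 0`, where
`a(m) = ∑ c_{i,j} (-1)^n`, summed over the representations `m = i * n ^ j`, is a bounded sequence
of integers. If `a` vanishes on a long enough interval `(M, M + L]`, then `b ^ M` times the tail
beyond `M` is an integer of absolute value less than `1`, so the partial sum up to `M` is already
zero. Hence `a(m) = 0` whenever `m` is isolated, meaning that `a` vanishes at every other point
of `[m - L, m + L]` (`eq_zero_of_isolated`).

It remains to produce an isolated `m` with `a(m) ≠ 0`. Let `d` be the smallest exponent with a
nonzero coefficient, `i₀` the smallest multiplier occurring with that exponent, and look for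
`m = i₀ * x ^ d`. The obstructions are solutions of `i₀ * x ^ d = i * y ^ j + h` with `|h| ≤ L`.
For fixed `(i, j, h)`, with `h ≠ 0` if `j = d`, the gaps between consecutive `x` that admit such a
`y` tend to infinity (`gap_of_eq`, `gap_of_lt`). Finitely many sets with this property cannot cover
the far part of an arithmetic progression (`exists_avoiding`). Taking `x ≡ 1` modulo every
multiplier `i` excludes the remaining coincidences `i₀ * x ^ d = i * y ^ d` with `i > i₀`, since
they would give `i ∣ i₀`. Thus `a(m) = ± c_{i₀,d} ≠ 0`, a contradiction.
-/

lemma pow_succ_gap {u v : ℕ} (k : ℕ) (h : u < v) : u ^ (k + 1) + v ^ k ≤ v ^ (k + 1) := by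
  have h1 : u ^ k ≤ v ^ k := Nat.pow_le_pow_left h.le k
  calc u ^ (k + 1) + v ^ k = u ^ k * u + v ^ k := by ring
    _ ≤ v ^ k * u + v ^ k := by gcongr
    _ = v ^ k * (u + 1) := by ring
    _ ≤ v ^ k * v := by gcongr; omega
    _ = v ^ (k + 1) := by ring

lemma pow_succ_le_add {x₁ x₂ G : ℕ} (k : ℕ) (h1 : x₁ ≤ x₂) (h2 : x₂ ≤ x₁ + G) :
    x₂ ^ (k + 1) ≤ x₁ ^ (k + 1) + (k + 1) * G * x₂ ^ k := by
  induction k with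
  | zero => simpa using h2
  | succ k ih =>
    have h3 : x₁ ^ (k + 1) ≤ x₂ ^ (k + 1) := Nat.pow_le_pow_left h1 _
    calc x₂ ^ (k + 1 + 1) = x₂ * x₂ ^ (k + 1) := by ring
      _ ≤ x₂ * (x₁ ^ (k + 1) + (k + 1) * G * x₂ ^ k) := by gcongr
      _ = x₂ * x₁ ^ (k + 1) + (k + 1) * G * x₂ ^ (k + 1) := by ring
      _ ≤ (x₁ + G) * x₁ ^ (k + 1) + (k + 1) * G * x₂ ^ (k + 1) := by gcongr
      _ = x₁ ^ (k + 1 + 1) + G * x₁ ^ (k + 1) + (k + 1) * G * x₂ ^ (k + 1) := by ring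
      _ ≤ x₁ ^ (k + 1 + 1) + G * x₂ ^ (k + 1) + (k + 1) * G * x₂ ^ (k + 1) := by gcongr
      _ = x₁ ^ (k + 1 + 1) + (k + 1 + 1) * G * x₂ ^ (k + 1) := by ring

/-- Equal exponents: two large solutions of `a * x ^ d = c * y ^ d + h`, with `h ≠ 0`, cannot have
their `x` within distance `G`. Eliminating `a` gives
`c * ((x₂ * y₁) ^ d - (x₁ * y₂) ^ d) = h * (x₁ ^ d - x₂ ^ d)`; the right side is nonzero and
`O(x₂ ^ (d - 1))`, while a nonzero left side is at least `(x₂ * y₁) ^ (d - 1)`. -/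
lemma gap_of_eq {d : ℕ} (hd : 2 ≤ d) {a c : ℕ} (ha : 1 ≤ a) (hc : 1 ≤ c) {h : ℤ} (hh : h ≠ 0)
    (G : ℕ) : ∃ N : ℕ, ∀ x₁ x₂ y₁ y₂ : ℕ, N ≤ x₁ → x₁ < x₂ → x₂ ≤ x₁ + G →
      (a : ℤ) * x₁ ^ d = c * y₁ ^ d + h → (a : ℤ) * x₂ ^ d = c * y₂ ^ d + h → False := by
  obtain ⟨k, rfl⟩ : ∃ k, d = k + 1 := ⟨d - 1, by omega⟩
  set K := h.natAbs * ((k + 1) * G) with hK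
  refine ⟨c * K ^ (k + 1) + h.natAbs + 1, fun x₁ x₂ y₁ y₂ hN hlt hG e1 e2 => ?_⟩
  have hy : K < y₁ := by
    by_contra! hle
    have h1 : y₁ ^ (k + 1) ≤ K ^ (k + 1) := Nat.pow_le_pow_left hle _
    have h2 : x₁ ≤ a * x₁ ^ (k + 1) :=
      (Nat.le_self_pow (by omega) x₁).trans (Nat.le_mul_of_pos_left _ ha)
    have h3 : c * y₁ ^ (k + 1) ≤ c * K ^ (k + 1) := Nat.mul_le_mul_left _ h1
    zify at h2 h3 hN
    have := le_abs_self h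
    linarith
  have key : (c : ℤ) * (((x₂ * y₁ : ℕ) : ℤ) ^ (k + 1) - ((x₁ * y₂ : ℕ) : ℤ) ^ (k + 1))
      = h * ((x₁ : ℤ) ^ (k + 1) - (x₂ : ℤ) ^ (k + 1)) := by
    push_cast
    rw [mul_pow, mul_pow]
    linear_combination (-(x₂ : ℤ) ^ (k + 1)) * e1 + (x₁ : ℤ) ^ (k + 1) * e2
  have hxlt : x₁ ^ (k + 1) < x₂ ^ (k + 1) := Nat.pow_lt_pow_left hlt (by omega)
  have hup := pow_succ_le_add k hlt.le hG
  set u := x₂ * y₁ with hu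
  set v := x₁ * y₂ with hv
  have huv : u ≠ v := by
    intro e
    rw [e, sub_self, mul_zero] at key
    rcases mul_eq_zero.mp key.symm with h0 | h0
    · exact hh h0
    · zify at hxlt
      linarith
  have hlow : (u : ℤ) ^ k ≤ |(u : ℤ) ^ (k + 1) - (v : ℤ) ^ (k + 1)| := by
    rcases lt_or_gt_of_ne huv with hl | hl
    · have h1 := pow_succ_gap k hl
      have h2 : u ^ k ≤ v ^ k := Nat.pow_le_pow_left hl.le k
      zify at h1 h2
      rw [abs_sub_comm]
      exact le_trans (by linarith) (le_abs_self _)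
    · have h1 := pow_succ_gap k hl
      zify at h1
      exact le_trans (by linarith) (le_abs_self _)
  have habs : (c : ℤ) * |(u : ℤ) ^ (k + 1) - (v : ℤ) ^ (k + 1)|
      = |h| * ((x₂ : ℤ) ^ (k + 1) - (x₁ : ℤ) ^ (k + 1)) := by
    have := congrArg abs key
    rw [abs_mul, abs_mul, abs_sub_comm ((x₁ : ℤ) ^ (k + 1))] at this
    rw [Nat.abs_cast] at this
    rw [this]
    congr 1
    apply abs_of_pos
    zify at hxlt
    linarith
  have hfin : (u : ℤ) ^ k ≤ K * (x₂ : ℤ) ^ k := by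
    calc (u : ℤ) ^ k ≤ |(u : ℤ) ^ (k + 1) - (v : ℤ) ^ (k + 1)| := hlow
      _ ≤ (c : ℤ) * |(u : ℤ) ^ (k + 1) - (v : ℤ) ^ (k + 1)| :=
        le_mul_of_one_le_left (abs_nonneg _) (by exact_mod_cast hc)
      _ = |h| * ((x₂ : ℤ) ^ (k + 1) - (x₁ : ℤ) ^ (k + 1)) := habs
      _ ≤ |h| * ((k + 1) * G * (x₂ : ℤ) ^ k) := by
        zify at hup
        gcongr
        linarith
      _ = K * (x₂ : ℤ) ^ k := by
        rw [hK]; push_cast; ring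
  have hfin' : u ^ k ≤ K * x₂ ^ k := by exact_mod_cast hfin
  rw [hu, mul_pow, mul_comm] at hfin'
  have hyK : y₁ ^ k ≤ K := Nat.le_of_mul_le_mul_right hfin' (Nat.pow_pos (by omega))
  have : y₁ ≤ y₁ ^ k := Nat.le_self_pow (by omega) _
  omega

/-- Distinct exponents `d < j`: two large solutions of `a * x ^ d = c * y ^ j + h` cannot have
their `x` within distance `G`. Indeed `y₂ ^ (j - 1) = O(x₂ ^ (d - 1))` and `x₂ ^ d = O(y₂ ^ j)`
together bound `y₂ ^ (j - d)`. -/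
lemma gap_of_lt {d j : ℕ} (hd : 1 ≤ d) (hj : d < j) {a c : ℕ} (ha : 1 ≤ a) (hc : 1 ≤ c) (h : ℤ)
    (G : ℕ) : ∃ N : ℕ, ∀ x₁ x₂ y₁ y₂ : ℕ, N ≤ x₁ → x₁ < x₂ → x₂ ≤ x₁ + G →
      (a : ℤ) * x₁ ^ d = c * y₁ ^ j + h → (a : ℤ) * x₂ ^ d = c * y₂ ^ j + h → False := by
  obtain ⟨k, rfl⟩ : ∃ k, d = k + 1 := ⟨d - 1, by omega⟩
  obtain ⟨r, rfl⟩ : ∃ r, j = (k + r + 1) + 1 := ⟨j - k - 2, by omega⟩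
  set l := k + r + 1 with hl
  set A := a * ((k + 1) * G) with hA
  set C := c + h.natAbs with hC
  set K := A ^ (k + 1) * C ^ k with hK
  clear_value K A C
  refine ⟨C * K ^ (l + 1) + 1, fun x₁ x₂ y₁ y₂ hN hlt hG e1 e2 => ?_⟩
  have hxlt : x₁ ^ (k + 1) < x₂ ^ (k + 1) := Nat.pow_lt_pow_left hlt (by omega)
  have hup := pow_succ_le_add k hlt.le hG
  have hy : y₁ < y₂ := by
    by_contra! hle
    have h1 : y₂ ^ (l + 1) ≤ y₁ ^ (l + 1) := Nat.pow_le_pow_left hle _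
    have h2 : c * y₂ ^ (l + 1) ≤ c * y₁ ^ (l + 1) := Nat.mul_le_mul_left _ h1
    have h3 : a * x₁ ^ (k + 1) < a * x₂ ^ (k + 1) := Nat.mul_lt_mul_of_pos_left hxlt ha
    zify at h2 h3
    linarith
  have hB1 : y₂ ^ l ≤ A * x₂ ^ k := by
    have h1 := pow_succ_gap l hy
    have h2 : y₂ ^ l ≤ c * y₂ ^ l := Nat.le_mul_of_pos_left _ hc
    have h3 := Nat.mul_le_mul_left c h1
    have h4 := Nat.mul_le_mul_left a hup
    rw [hA]
    zify at h2 h3 h4 ⊢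
    linarith
  have hB2 : x₂ ^ (k + 1) ≤ C * y₂ ^ (l + 1) := by
    have h1 : x₂ ^ (k + 1) ≤ a * x₂ ^ (k + 1) := Nat.le_mul_of_pos_left _ ha
    have h2 : h.natAbs ≤ h.natAbs * y₂ ^ (l + 1) :=
      Nat.le_mul_of_pos_right _ (Nat.pow_pos (by omega))
    rw [hC]
    zify at h1 h2 ⊢
    have := le_abs_self h
    linarith
  have hB3 : y₂ ^ (r + 1) * y₂ ^ ((l + 1) * k) ≤ K * y₂ ^ ((l + 1) * k) := by
    calc y₂ ^ (r + 1) * y₂ ^ ((l + 1) * k) = (y₂ ^ l) ^ (k + 1) := by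
          rw [← pow_add, ← pow_mul]
          congr 1
          rw [hl]; ring
      _ ≤ (A * x₂ ^ k) ^ (k + 1) := Nat.pow_le_pow_left hB1 _
      _ = A ^ (k + 1) * (x₂ ^ (k + 1)) ^ k := by
          rw [mul_pow, ← pow_mul, ← pow_mul, mul_comm k]
      _ ≤ A ^ (k + 1) * (C * y₂ ^ (l + 1)) ^ k := by gcongr
      _ = K * y₂ ^ ((l + 1) * k) := by
          rw [hK, mul_pow, ← pow_mul]; ring
  have hy0 : 0 < y₂ := by omega
  have hB4 : y₂ ^ (r + 1) ≤ K := Nat.le_of_mul_le_mul_right hB3 (by positivity)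
  have hB5 : y₂ ≤ K := (Nat.le_self_pow (by omega) _).trans hB4
  have hB6 : C * y₂ ^ (l + 1) ≤ C * K ^ (l + 1) := by gcongr
  have hB7 : x₂ ≤ x₂ ^ (k + 1) := Nat.le_self_pow (by omega) _
  omega

/-- Finitely many sets `B s`, each with gaps tending to infinity, cannot cover the far part of an
arithmetic progression: on `S.card + 1` consecutive far terms each `B s` holds at most once. -/
lemma exists_avoiding {ι : Type*} (S : Finset ι) (B : ι → ℕ → Prop)
    (hB : ∀ s ∈ S, ∀ G : ℕ, ∃ N : ℕ, ∀ x₁ x₂ : ℕ, N ≤ x₁ → x₁ < x₂ → x₂ ≤ x₁ + G →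
      B s x₁ → B s x₂ → False) {Q : ℕ} (hQ : 1 ≤ Q) (N₀ : ℕ) :
    ∃ t : ℕ, N₀ ≤ t ∧ ∀ s ∈ S, ¬ B s (Q * t + 1) := by
  classical
  by_contra! hcon
  have hB' : ∀ s : ι, ∃ N : ℕ, s ∈ S → ∀ x₁ x₂ : ℕ, N ≤ x₁ → x₁ < x₂ → x₂ ≤ x₁ + Q * S.card →
      B s x₁ → B s x₂ → False := by
    intro s
    by_cases hs : s ∈ S
    · obtain ⟨N, hN⟩ := hB s hs (Q * S.card)
      exact ⟨N, fun _ => hN⟩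
    · exact ⟨0, fun h => absurd h hs⟩
  choose N hN using hB'
  set T := N₀ + S.sup N with hT
  have h1 : ∀ t : ℕ, ∃ s ∈ S, B s (Q * (T + t) + 1) := fun t => hcon (T + t) (by omega)
  choose f hfS hfB using h1
  obtain ⟨t₁, ht₁, t₂, ht₂, hne, hf⟩ :=
    Finset.exists_ne_map_eq_of_card_lt_of_maps_to (s := Finset.range (S.card + 1)) (t := S)
      (by simp) (f := f) (fun t _ => hfS t)
  wlog hlt : t₁ < t₂ generalizing t₁ t₂
  · exact this t₂ ht₂ t₁ ht₁ hne.symm hf.symm (by omega)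
  have hNle : N (f t₁) ≤ S.sup N := Finset.le_sup (hfS t₁)
  refine hN (f t₁) (hfS t₁) (Q * (T + t₁) + 1) (Q * (T + t₂) + 1) ?_ ?_ ?_ (hfB t₁)
    (hf ▸ hfB t₂)
  · have : T + t₁ ≤ Q * (T + t₁) := Nat.le_mul_of_pos_left _ hQ
    omega
  · have := Nat.mul_lt_mul_of_pos_left (show T + t₁ < T + t₂ by omega) hQ
    omega
  · simp only [Finset.mem_range] at ht₂
    have := Nat.mul_le_mul_left Q (show T + t₂ ≤ T + t₁ + S.card by omega)
    have h2 : Q * (T + t₁ + S.card) = Q * (T + t₁) + Q * S.card := mul_add _ _ _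
    omega

lemma summable_digits_s2 {b : ℕ} (hb : 2 ≤ b) {a : ℕ → ℤ} {C : ℕ} (hC : ∀ m, |a m| ≤ C) :
    Summable fun m => (a m : ℝ) / (b : ℝ) ^ m := by
  have hb' : (2 : ℝ) ≤ b := by exact_mod_cast hb
  have hg : Summable fun m : ℕ => (C : ℝ) * ((b : ℝ)⁻¹) ^ m :=
    (summable_geometric_of_lt_one (by positivity) (inv_lt_one_of_one_lt₀ (by linarith))).mul_left _
  refine Summable.of_norm_bounded hg fun m => ?_
  have h1 : |(a m : ℝ)| ≤ C := by exact_mod_cast hC m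
  rw [Real.norm_eq_abs, abs_div, abs_of_pos (show (0 : ℝ) < (b : ℝ) ^ m by positivity),
    div_eq_mul_inv, inv_pow]
  gcongr

/-- If the bounded integer sequence `a` vanishes on `(M, M + L]` with `b ^ L` larger than the
bound, the partial sum up to `M` vanishes, because `b ^ M` times it is an integer in `(-1, 1)`. -/
lemma partial_sum_eq_zero {b : ℕ} (hb : 2 ≤ b) {a : ℕ → ℤ} {C L : ℕ} (hC : ∀ m, |a m| ≤ C)
    (hL : C < b ^ L) {c₀ : ℤ} (h0 : (c₀ : ℝ) + ∑' m, (a m : ℝ) / (b : ℝ) ^ m = 0) {M : ℕ}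
    (hM : ∀ m, M < m → m ≤ M + L → a m = 0) :
    (c₀ : ℝ) + ∑ m ∈ Finset.range (M + 1), (a m : ℝ) / (b : ℝ) ^ m = 0 := by
  have hb' : (2 : ℝ) ≤ b := by exact_mod_cast hb
  have hb0 : (0 : ℝ) < b := by linarith
  have hs := summable_digits_s2 hb hC
  have hsplit := hs.sum_add_tsum_nat_add (M + L + 1)
  have hsum : ∑ m ∈ Finset.range (M + L + 1), (a m : ℝ) / (b : ℝ) ^ m
      = ∑ m ∈ Finset.range (M + 1), (a m : ℝ) / (b : ℝ) ^ m := by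
    symm
    apply Finset.sum_subset
    · intro m; simp only [Finset.mem_range]; omega
    · intro m h1 h2
      simp only [Finset.mem_range] at h1 h2
      rw [hM m (by omega) (by omega)]
      simp
  set t := ∑' m, (a (m + (M + L + 1)) : ℝ) / (b : ℝ) ^ (m + (M + L + 1)) with ht
  have htail : |t| ≤ C / (b : ℝ) ^ (M + L) := by
    have hg : HasSum (fun m : ℕ => (C : ℝ) / (b : ℝ) ^ (M + L + 1) * ((1 : ℝ) / 2) ^ m)
        ((C : ℝ) / (b : ℝ) ^ (M + L + 1) * 2) := hasSum_geometric_two.mul_left _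
    have h1 : ‖t‖ ≤ (C : ℝ) / (b : ℝ) ^ (M + L + 1) * 2 := by
      refine tsum_of_norm_bounded hg fun m => ?_
      have h2 : |(a (m + (M + L + 1)) : ℝ)| ≤ C := by exact_mod_cast hC _
      rw [Real.norm_eq_abs, abs_div,
        abs_of_pos (show (0 : ℝ) < (b : ℝ) ^ (m + (M + L + 1)) by positivity)]
      calc |(a (m + (M + L + 1)) : ℝ)| / (b : ℝ) ^ (m + (M + L + 1))
          ≤ C / (2 ^ m * (b : ℝ) ^ (M + L + 1)) := by
            rw [pow_add]
            gcongr
        _ = (C : ℝ) / (b : ℝ) ^ (M + L + 1) * ((1 : ℝ) / 2) ^ m := by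
            rw [one_div, inv_pow]; field_simp
    rw [Real.norm_eq_abs] at h1
    refine h1.trans ?_
    rw [pow_succ, div_mul_eq_mul_div, div_le_div_iff₀ (by positivity) (by positivity)]
    have : (0 : ℝ) ≤ C * (b : ℝ) ^ (M + L) := by positivity
    nlinarith
  set P : ℤ := c₀ * b ^ M + ∑ m ∈ Finset.range (M + 1), a m * b ^ (M - m) with hP
  have hPR : (P : ℝ) = (b : ℝ) ^ M *
      ((c₀ : ℝ) + ∑ m ∈ Finset.range (M + 1), (a m : ℝ) / (b : ℝ) ^ m) := by
    rw [hP]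
    push_cast
    rw [mul_add, Finset.mul_sum, mul_comm (c₀ : ℝ)]
    congr 1
    refine Finset.sum_congr rfl fun m hm => ?_
    simp only [Finset.mem_range] at hm
    have : (b : ℝ) ^ M = (b : ℝ) ^ (M - m) * (b : ℝ) ^ m := by
      rw [← pow_add]; congr 1; omega
    rw [this]
    field_simp
  have hPt : (P : ℝ) = -((b : ℝ) ^ M * t) := by
    rw [hPR]
    rw [hsum] at hsplit
    linear_combination (b : ℝ) ^ M * h0 + (b : ℝ) ^ M * hsplit
  have hPlt : |(P : ℝ)| < 1 := by
    rw [hPt, abs_neg, abs_mul, abs_of_pos (show (0 : ℝ) < (b : ℝ) ^ M by positivity)]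
    calc (b : ℝ) ^ M * |t| ≤ (b : ℝ) ^ M * (C / (b : ℝ) ^ (M + L)) := by gcongr
      _ = C / (b : ℝ) ^ L := by rw [pow_add]; field_simp
      _ < 1 := by
        rw [div_lt_one (by positivity)]
        exact_mod_cast hL
  have hP0 : P = 0 := Int.abs_lt_one_iff.mp (by exact_mod_cast hPlt)
  rw [hP0, Int.cast_zero] at hPR
  exact (mul_eq_zero.mp hPR.symm).resolve_left (by positivity)

/-- Comparing the partial sums up to `m - L - 1` and up to `m`, an isolated term vanishes. -/
lemma eq_zero_of_isolated {b : ℕ} (hb : 2 ≤ b) {a : ℕ → ℤ} {C L : ℕ} (hC : ∀ m, |a m| ≤ C)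
    (hL : C < b ^ L) {c₀ : ℤ} (h0 : (c₀ : ℝ) + ∑' m, (a m : ℝ) / (b : ℝ) ^ m = 0) {m : ℕ}
    (hm : L < m) (hiso : ∀ m', m' ≠ m → m' ≤ m + L → m ≤ m' + L → a m' = 0) : a m = 0 := by
  have hb' : (2 : ℝ) ≤ b := by exact_mod_cast hb
  have h1 := partial_sum_eq_zero hb hC hL h0 (M := m)
    (fun m' h1 h2 => hiso m' (by omega) (by omega) (by omega))
  have h2 := partial_sum_eq_zero hb hC hL h0 (M := m - L - 1)
    (fun m' h1 h2 => hiso m' (by omega) (by omega) (by omega))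
  have h3 : ∑ k ∈ Finset.range (m - L - 1 + 1), (a k : ℝ) / (b : ℝ) ^ k
      = ∑ k ∈ Finset.range m, (a k : ℝ) / (b : ℝ) ^ k := by
    apply Finset.sum_subset
    · intro k; simp only [Finset.mem_range]; omega
    · intro k h1 h2
      simp only [Finset.mem_range] at h1 h2
      rw [hiso k (by omega) (by omega) (by omega)]
      simp
  rw [Finset.sum_range_succ, ← h3] at h1
  have h4 : (a m : ℝ) / (b : ℝ) ^ m = 0 := by linarith
  have hpos : (b : ℝ) ^ m ≠ 0 := by positivity
  exact_mod_cast (div_eq_zero_iff.mp h4).resolve_right hpos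

/-- The `m`-th base-`b` coefficient of `∑ₙ (-1)^(n+1) / b ^ (i * (n+1) ^ j)` for `p = (i, j)`:
`(-1)^(n+1)` if `m = i * (n+1) ^ j`, and `0` if `m` is not of this form. -/
noncomputable def coeffAt (p : ℕ × ℕ) : ℕ → ℤ :=
  Function.extend (fun n : ℕ => p.1 * (n + 1) ^ p.2) (fun n => (-1) ^ (n + 1)) 0

lemma exponent_injective_s2 {p : ℕ × ℕ} (h1 : 1 ≤ p.1) (h2 : 2 ≤ p.2) :
    Function.Injective (fun n : ℕ => p.1 * (n + 1) ^ p.2) := by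
  intro m n h
  have h3 := Nat.eq_of_mul_eq_mul_left h1 h
  have := Nat.pow_left_injective (show p.2 ≠ 0 by omega) h3
  omega

lemma coeffAt_apply {p : ℕ × ℕ} (h1 : 1 ≤ p.1) (h2 : 2 ≤ p.2) (n : ℕ) :
    coeffAt p (p.1 * (n + 1) ^ p.2) = (-1) ^ (n + 1) :=
  (exponent_injective_s2 h1 h2).extend_apply _ _ n

lemma coeffAt_eq_zero {p : ℕ × ℕ} {m : ℕ} (h : ∀ n : ℕ, p.1 * (n + 1) ^ p.2 ≠ m) :
    coeffAt p m = 0 := by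
  rw [coeffAt, Function.extend_apply' _ _ _ (by simpa using h)]
  rfl

lemma abs_coeffAt_le {p : ℕ × ℕ} (h1 : 1 ≤ p.1) (h2 : 2 ≤ p.2) (m : ℕ) : |coeffAt p m| ≤ 1 := by
  by_cases h : ∃ n : ℕ, p.1 * (n + 1) ^ p.2 = m
  · obtain ⟨n, rfl⟩ := h
    rw [coeffAt_apply h1 h2]
    simp
  · push Not at h
    rw [coeffAt_eq_zero h]
    simp

lemma tsum_eq_tsum_coeffAt {p : ℕ × ℕ} (h1 : 1 ≤ p.1) (h2 : 2 ≤ p.2) (b : ℕ) :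
    ∑' n : ℕ, (-1 : ℝ) ^ (n + 1) / (b : ℝ) ^ (p.1 * (n + 1) ^ p.2)
      = ∑' m, (coeffAt p m : ℝ) / (b : ℝ) ^ m := by
  rw [← tsum_extend_zero (exponent_injective_s2 h1 h2)]
  refine tsum_congr fun m => ?_
  by_cases h : ∃ n : ℕ, p.1 * (n + 1) ^ p.2 = m
  · obtain ⟨n, rfl⟩ := h
    rw [coeffAt_apply h1 h2, (exponent_injective_s2 h1 h2).extend_apply]
    push_cast
    rfl
  · rw [Function.extend_apply' _ _ _ h, coeffAt_eq_zero (by simpa using h)]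
    simp

/-- A combination over a nonempty set of pairs `(i, j)` with nonzero integer coefficients is never
an integer. -/
lemma no_relation {b : ℕ} (hb : 2 ≤ b) {F : Finset {p : ℕ × ℕ // 1 ≤ p.1 ∧ 2 ≤ p.2}}
    (hF : F.Nonempty) {c : {p : ℕ × ℕ // 1 ≤ p.1 ∧ 2 ≤ p.2} → ℤ} (hc : ∀ q ∈ F, c q ≠ 0)
    (c₀ : ℤ) : (c₀ : ℝ) + ∑ q ∈ F, (c q : ℝ) *
      ∑' n : ℕ, (-1 : ℝ) ^ (n + 1) / (b : ℝ) ^ (q.1.1 * (n + 1) ^ q.1.2) ≠ 0 := by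
  classical
  intro h0
  set C : ℕ := ∑ q ∈ F, (c q).natAbs with hCdef
  set a : ℕ → ℤ := fun m => ∑ q ∈ F, c q * coeffAt q.1 m with ha
  have hC : ∀ m, |a m| ≤ C := by
    intro m
    refine (Finset.abs_sum_le_sum_abs _ _).trans ?_
    rw [hCdef]
    push_cast
    refine Finset.sum_le_sum fun q _ => ?_
    rw [abs_mul]
    exact mul_le_of_le_one_right (abs_nonneg _) (abs_coeffAt_le q.2.1 q.2.2 m)
  have h0' : (c₀ : ℝ) + ∑' m, (a m : ℝ) / (b : ℝ) ^ m = 0 := by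
    rw [← h0]
    congr 1
    have hs : ∀ q ∈ F, Summable fun m => (c q : ℝ) * ((coeffAt q.1 m : ℝ) / (b : ℝ) ^ m) :=
      fun q _ => (summable_digits_s2 hb (C := 1)
        (by simpa using abs_coeffAt_le q.2.1 q.2.2)).mul_left _
    calc ∑' m, (a m : ℝ) / (b : ℝ) ^ m
        = ∑' m, ∑ q ∈ F, (c q : ℝ) * ((coeffAt q.1 m : ℝ) / (b : ℝ) ^ m) := by
          refine tsum_congr fun m => ?_
          rw [ha]
          push_cast
          rw [Finset.sum_div]
          exact Finset.sum_congr rfl fun q _ => by ring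
      _ = ∑ q ∈ F, ∑' m, (c q : ℝ) * ((coeffAt q.1 m : ℝ) / (b : ℝ) ^ m) :=
          Summable.tsum_finsetSum hs
      _ = _ := by
          refine Finset.sum_congr rfl fun q _ => ?_
          rw [tsum_mul_left, tsum_eq_tsum_coeffAt q.2.1 q.2.2]
  obtain ⟨L, hL⟩ : ∃ L, C < b ^ L := ⟨C, Nat.lt_pow_self (by omega)⟩
  -- `q₀` minimizes first the exponent, then the multiplier.
  obtain ⟨q₀, hq₀F, hmin⟩ := F.exists_min_image (fun q => toLex (q.1.2, q.1.1)) hF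
  have hmin' : ∀ q ∈ F, q₀.1.2 < q.1.2 ∨ (q₀.1.2 = q.1.2 ∧ q₀.1.1 ≤ q.1.1) := by
    intro q hq
    have := hmin q hq
    rwa [Prod.Lex.toLex_le_toLex] at this
  obtain ⟨hi₀, hd⟩ := q₀.2
  set i₀ := q₀.1.1 with hi₀def
  set d := q₀.1.2 with hddef
  set S := (F ×ˢ Finset.Icc (-(L : ℤ)) L).filter (fun s => s.1.1.2 = d → s.2 ≠ 0) with hS
  set Q := ∏ q ∈ F, q.1.1 with hQ
  have hQ1 : 1 ≤ Q := Finset.prod_pos (f := fun q => q.1.1) fun q (_ : q ∈ F) => q.2.1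
  obtain ⟨t, htL, ht⟩ := exists_avoiding S
    (fun s x => ∃ y : ℕ, (i₀ : ℤ) * x ^ d = s.1.1.1 * y ^ s.1.1.2 + s.2) (by
      rintro ⟨q, h⟩ hs G
      simp only [hS, Finset.mem_filter, Finset.mem_product] at hs
      obtain ⟨⟨hqF, -⟩, hne⟩ := hs
      have hgap : ∃ N : ℕ, ∀ x₁ x₂ y₁ y₂ : ℕ, N ≤ x₁ → x₁ < x₂ → x₂ ≤ x₁ + G →
          (i₀ : ℤ) * x₁ ^ d = q.1.1 * y₁ ^ q.1.2 + h →
          (i₀ : ℤ) * x₂ ^ d = q.1.1 * y₂ ^ q.1.2 + h → False := by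
        rcases hmin' q hqF with hlt | ⟨heq, -⟩
        · exact gap_of_lt (by omega) hlt hi₀ q.2.1 h G
        · rw [← heq]
          exact gap_of_eq hd hi₀ q.2.1 (hne heq.symm) G
      obtain ⟨N, hN⟩ := hgap
      exact ⟨N, fun x₁ x₂ h1 h2 h3 ⟨y₁, e1⟩ ⟨y₂, e2⟩ => hN x₁ x₂ y₁ y₂ h1 h2 h3 e1 e2⟩) hQ1 L
  set n₀ := Q * t with hn₀
  have htn : t ≤ n₀ := Nat.le_mul_of_pos_left _ hQ1
  set m := i₀ * (n₀ + 1) ^ d with hm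
  have hmL : L < m := by
    have h1 : n₀ + 1 ≤ (n₀ + 1) ^ d := Nat.le_self_pow (by omega) _
    have h2 : (n₀ + 1) ^ d ≤ m := Nat.le_mul_of_pos_left _ hi₀
    omega
  -- Near `m`, only representations of `m` itself with exponent `d` can occur.
  have hnear : ∀ q ∈ F, ∀ m' : ℕ, m' ≤ m + L → m ≤ m' + L → (q.1.2 = d → m' ≠ m) →
      coeffAt q.1 m' = 0 := by
    intro q hqF m' h1 h2 h3
    refine coeffAt_eq_zero fun n hn => ?_
    refine ht (q, (m : ℤ) - m') ?_ ⟨n + 1, ?_⟩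
    · simp only [hS, Finset.mem_filter, Finset.mem_product, Finset.mem_Icc]
      refine ⟨⟨hqF, by omega, by omega⟩, fun he => ?_⟩
      have := h3 he
      omega
    · simp only
      rw [← hn, hm]
      push_cast
      ring
  have ham : a m = c q₀ * (-1) ^ (n₀ + 1) := by
    rw [ha]
    simp only
    rw [Finset.sum_eq_single_of_mem q₀ hq₀F, hm, coeffAt_apply hi₀ hd]
    intro q hqF hne
    by_cases hqd : q.1.2 = d
    · have hlt : i₀ < q.1.1 := by
        rcases hmin' q hqF with h | ⟨-, h⟩
        · omega
        · refine lt_of_le_of_ne h fun he => hne (Subtype.ext (Prod.ext ?_ hqd))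
          exact he.symm
      rw [coeffAt_eq_zero, mul_zero]
      intro n hn
      have hcop : Nat.Coprime q.1.1 (n₀ + 1) := by
        obtain ⟨w, hw⟩ : q.1.1 ∣ n₀ := (Finset.dvd_prod_of_mem (fun q => q.1.1) hqF).mul_right t
        rw [hw]
        simp
      have hdvd : q.1.1 ∣ i₀ * (n₀ + 1) ^ d := ⟨_, hn.symm⟩
      have := Nat.le_of_dvd hi₀ ((hcop.pow_right d).dvd_of_dvd_mul_right hdvd)
      omega
    · rw [hnear q hqF m (by omega) (by omega) (fun h => absurd h hqd), mul_zero]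
  have hzero := eq_zero_of_isolated hb hC hL h0' hmL (fun m' h1 h2 h3 =>
    Finset.sum_eq_zero fun q hqF => by rw [hnear q hqF m' h2 h3 (fun _ => h1), mul_zero])
  rw [ham] at hzero
  exact (mul_ne_zero (hc q₀ hq₀F) (pow_ne_zero _ (by norm_num))) hzero

/-- **Corollary 2 (second part).** Let `b ≥ 2` be an integer. Then the set consisting of the
number `1` together with all the numbers `β_{i,j} = ∑_{n=1}^∞ (-1)^n/b^(i·n^j)` for integers
`i ≥ 1`, `j ≥ 2`, is linearly independent over `ℚ`. -/
theorem corollary2_second (b : ℕ) (hb : 2 ≤ b) :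
    LinearIndependent ℚ (fun x : Option {p : ℕ × ℕ // 1 ≤ p.1 ∧ 2 ≤ p.2} =>
      x.elim (1 : ℝ) fun q =>
        ∑' n : ℕ, (-1 : ℝ) ^ (n + 1) / (b : ℝ) ^ (q.1.1 * (n + 1) ^ q.1.2)) := by
  classical
  rw [← LinearIndependent.iff_fractionRing ℤ ℚ, linearIndependent_iff]
  intro l hl
  set c : {p : ℕ × ℕ // 1 ≤ p.1 ∧ 2 ≤ p.2} → ℤ := fun q => l (some q) with hc
  have hsum : ((l none : ℤ) : ℝ) + ∑ q ∈ l.some.support, (c q : ℝ) *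
      ∑' n : ℕ, (-1 : ℝ) ^ (n + 1) / (b : ℝ) ^ (q.1.1 * (n + 1) ^ q.1.2) = 0 := by
    rw [Finsupp.linearCombination_option] at hl
    simpa [Finsupp.linearCombination_apply, Finsupp.sum, zsmul_eq_mul] using hl
  have hempty : l.some.support = ∅ := by
    by_contra hne
    exact no_relation hb (Finset.nonempty_iff_ne_empty.mpr hne)
      (fun q hq => by simpa [hc] using hq) (l none) hsum
  rw [hempty, Finset.sum_empty, add_zero] at hsum
  ext x
  cases x with
  | none => exact_mod_cast hsum
  | some q =>
    have : l.some = 0 := Finsupp.support_eq_empty.mp hempty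
    exact DFunLike.congr_fun this q
end

section
/- Let k ≥ 2, b ≥ 2 and 1 ≤ a₁ < a₂ < ⋯ < a_m be integers such that for all i ≠ j the real number (a_i/a_j)^{1/k} is irrational. Then the m+1 real numbers 1, Σ_{n=1}^∞ 1/b^{a₁·n^k}, Σ_{n=1}^∞ 1/b^{a₂·n^k}, …, Σ_{n=1}^∞ 1/b^{a_m·n^k} are linearly independent over ℚ. -/
/-!
Clear denominators: a relation over `ℚ` becomes an integer relation
`c₀ + ∑ᵢ cᵢ ∑ₙ b^(-aᵢ nᵏ) = 0`. Grouping by exponent, it reads `∑_N d_N b^(-N) = -c₀` with bounded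
integer "digits" `d_N = ∑ᵢ cᵢ · [N = aᵢ nᵏ for some n ≥ 1]`.

The tails `T_N = ∑_M d_{N+M} b^(-M)` are integers, they are bounded, and `T_{N+1} = b (T_N - d_N)`.
Across a run of `L` zero digits `T` is multiplied by `b ^ L`, so if `L` is large then `T` must
vanish at the start of the run. Hence a digit with `L` zero digits on both sides is itself
zero (`digit_eq_zero_of_isolated`).

It remains to find, for each `i` and `L`, an exponent `aᵢ nᵏ` having no other exponent within
distance `L` (`exists_isolated`). Put `α = (aᵢ / aⱼ)^(1/k)`. If `|aᵢ nᵏ - aⱼ lᵏ| ≤ L`, then `α n` is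
within `O(1/n)` of the integer `l`, because `k ≥ 2`. If this happens for both `n` and `n'` with
`0 < n' - n ≤ m`, then `α (n' - n)` is very close to an integer, which is impossible for large `n`
as `α` is irrational. So, far out, each `j ≠ i` spoils at most one `n` in a window of length `m`;
as there are only `m - 1` such `j`, some `n` in the window is spoiled by none. The digit at
`aᵢ nᵏ` is then `cᵢ`, so `cᵢ = 0`.
-/

/-- Multiples `α d` of an irrational number with `1 ≤ d ≤ D` stay uniformly away from `ℤ`. -/
lemma irrational_dist_int (α : ℝ) (hα : Irrational α) (D : ℕ) :
    ∃ ε : ℝ, 0 < ε ∧ ∀ d : ℕ, 1 ≤ d → d ≤ D → ∀ p : ℤ, ε ≤ |α * d - p| := by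
  induction D with
  | zero => exact ⟨1, one_pos, fun d h1 h2 => by omega⟩
  | succ D ih =>
    obtain ⟨ε, hε, h⟩ := ih
    have hpos : 0 < |α * ((D + 1 : ℕ) : ℝ) - round (α * ((D + 1 : ℕ) : ℝ))| := by
      rw [abs_pos, sub_ne_zero]
      exact (hα.mul_natCast (Nat.succ_ne_zero D)).ne_int _
    refine ⟨min ε _, lt_min hε hpos, fun d h1 h2 p => ?_⟩
    rcases Nat.lt_or_ge D d with hd | hd
    · obtain rfl : d = D + 1 := by omega
      exact (min_le_right _ _).trans (round_le _ _)
    · exact (min_le_left _ _).trans (h d h1 hd p)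

lemma abs_sub_mul_pow_le (x y : ℝ) (hx : 0 ≤ x) (hy : 0 ≤ y) (r : ℕ) :
    |x - y| * x ^ r ≤ |x ^ (r + 1) - y ^ (r + 1)| := by
  rw [pow_succ, pow_succ]
  rcases le_total x y with h | h
  · have h1 : x ^ r ≤ y ^ r := pow_le_pow_left₀ hx h r
    rw [abs_of_nonpos (by linarith), abs_of_nonpos (by nlinarith [pow_nonneg hx r])]
    nlinarith
  · have h1 : y ^ r ≤ x ^ r := pow_le_pow_left₀ hy h r
    rw [abs_of_nonneg (by linarith), abs_of_nonneg (by nlinarith [pow_nonneg hy r])]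
    nlinarith

/-- If `A nᵏ` and `B lᵏ` differ by at most `L` and `n` is large, then `(A/B)^(1/k) n` is close
to `l`. -/
lemma approx (k A B L : ℕ) (hk : 2 ≤ k) (hA : 1 ≤ A) (hB : 1 ≤ B) (ε : ℝ) (hε : 0 < ε) :
    ∃ M : ℕ, ∀ n l : ℕ, M ≤ n → |(A : ℤ) * n ^ k - B * l ^ k| ≤ L →
      |((A : ℝ) / B) ^ ((1 : ℝ) / k) * n - l| ≤ ε := by
  set α : ℝ := ((A : ℝ) / B) ^ ((1 : ℝ) / k) with hα
  have hA' : (1 : ℝ) ≤ A := by exact_mod_cast hA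
  have hB' : (1 : ℝ) ≤ B := by exact_mod_cast hB
  have hα0 : 0 < α := Real.rpow_pos_of_pos (by positivity) _
  have hαk : α ^ k = (A : ℝ) / B := by
    rw [hα, one_div]
    exact Real.rpow_inv_natCast_pow (by positivity) (by omega)
  obtain ⟨M, hM⟩ := exists_nat_ge (max 1 (L / ε) / α)
  refine ⟨M, fun n l hn h => ?_⟩
  have hx : max 1 (L / ε) ≤ α * n := by
    have : max 1 (L / ε) / α ≤ n := hM.trans (by exact_mod_cast hn)
    rw [div_le_iff₀ hα0] at this
    linarith
  have hx1 : 1 ≤ α * n := (le_max_left _ _).trans hx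
  have hx2 : L ≤ ε * (α * n) := by
    have := (le_max_right _ _).trans hx
    rw [div_le_iff₀ hε] at this
    linarith
  obtain ⟨r, rfl⟩ : ∃ r, k = r + 1 := ⟨k - 1, by omega⟩
  have h1 := abs_sub_mul_pow_le (α * n) l (by linarith) (by positivity) r
  have h2 : |(A : ℝ) * n ^ (r + 1) - B * l ^ (r + 1)| ≤ L := by exact_mod_cast h
  have h3 : (A : ℝ) * n ^ (r + 1) - B * l ^ (r + 1)
      = B * ((α * n) ^ (r + 1) - l ^ (r + 1)) := by
    rw [mul_pow, hαk]
    field_simp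
  rw [h3, abs_mul, abs_of_pos (by linarith : (0 : ℝ) < B)] at h2
  have h4 : α * n ≤ (α * n) ^ r := le_self_pow₀ hx1 (by omega)
  have h5 := abs_nonneg (α * n - l)
  have h6 := abs_nonneg ((α * n) ^ (r + 1) - (l : ℝ) ^ (r + 1))
  have h7 : |α * n - l| * (α * n) ≤ ε * (α * n) := by nlinarith
  exact le_of_mul_le_mul_right h7 (by linarith)

/-- Two large integers `n < n' ≤ n + D` cannot both have `A nᵏ` within `L` of some `B lᵏ`. -/
lemma gap (k A B L D : ℕ) (hk : 2 ≤ k) (hA : 1 ≤ A) (hB : 1 ≤ B)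
    (hirr : Irrational (((A : ℝ) / B) ^ ((1 : ℝ) / k))) :
    ∃ M : ℕ, ∀ n n' l l' : ℕ, M ≤ n → n < n' → n' ≤ n + D →
      |(A : ℤ) * n ^ k - B * l ^ k| ≤ L → |(A : ℤ) * n' ^ k - B * l' ^ k| ≤ L → False := by
  obtain ⟨ε, hε, h⟩ := irrational_dist_int _ hirr D
  obtain ⟨M, hM⟩ := approx k A B L hk hA hB (ε / 3) (by positivity)
  refine ⟨M, fun n n' l l' hn hlt hle h1 h2 => ?_⟩
  have e1 := hM n l hn h1
  have e2 := hM n' l' (by omega) h2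
  have e3 := h (n' - n) (by omega) (by omega) ((l' : ℤ) - l)
  rw [Nat.cast_sub hlt.le] at e3
  push_cast at e3
  rw [abs_le] at e1 e2
  have : |((A : ℝ) / B) ^ ((1 : ℝ) / k) * ((n' : ℝ) - n) - ((l' : ℝ) - l)| ≤ 2 * ε / 3 := by
    rw [abs_le]
    constructor <;> linarith [e1.1, e1.2, e2.1, e2.2]
  linarith

/-- Some exponent `aᵢ nᵏ` is at distance more than `L` from every other exponent `aⱼ lᵏ`. -/
lemma exists_isolated (k m L : ℕ) (hk : 2 ≤ k) (a : Fin m → ℕ) (ha1 : ∀ i, 1 ≤ a i)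
    (hirr : ∀ i j : Fin m, i ≠ j →
      Irrational (((a i : ℝ) / (a j : ℝ)) ^ ((1 : ℝ) / k))) (i : Fin m) :
    ∃ n : ℕ, L < n ∧ ∀ (j : Fin m) (l : ℕ), (j ≠ i ∨ l ≠ n) →
      (L : ℤ) < |(a i : ℤ) * n ^ k - a j * l ^ k| := by
  have hg : ∀ j, ∃ M : ℕ, j ≠ i → ∀ n n' l l' : ℕ, M ≤ n → n < n' → n' ≤ n + m →
      |(a i : ℤ) * n ^ k - a j * l ^ k| ≤ L → |(a i : ℤ) * n' ^ k - a j * l' ^ k| ≤ L →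
        False := by
    intro j
    by_cases hj : j = i
    · exact ⟨0, fun h => absurd hj h⟩
    · obtain ⟨M, hM⟩ := gap k (a i) (a j) L m hk (ha1 i) (ha1 j) (hirr i j (Ne.symm hj))
      exact ⟨M, fun _ => hM⟩
  choose M hM using hg
  set N := Finset.univ.sup M + L + 1 with hN
  have hMN : ∀ j, M j ≤ N := fun j => by
    have := Finset.le_sup (f := M) (Finset.mem_univ j)
    omega
  obtain ⟨t, ht⟩ : ∃ t : Fin m, ∀ (j : Fin m) (l : ℕ), j ≠ i →
      (L : ℤ) < |(a i : ℤ) * (N + t : ℕ) ^ k - a j * l ^ k| := by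
    by_contra! hcon
    choose f l hf hl using hcon
    -- `f` misses `i`, so it is not injective.
    have hinj : ¬ Function.Injective f := fun hi => by
      obtain ⟨t, ht⟩ := Finite.injective_iff_surjective.mp hi i
      exact hf t ht
    apply hinj
    intro s t hst
    by_contra hne
    wlog hlt : s < t generalizing s t
    · exact this hst.symm (Ne.symm hne) (lt_of_le_of_ne (not_lt.mp hlt) (Ne.symm hne))
    have h2 := hl t
    rw [← hst] at h2
    have := hMN (f s)
    exact hM (f s) (hf s) (N + s) (N + t) (l s) (l t) (by omega) (by omega) (by omega)
      (hl s) h2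
  refine ⟨N + t, by omega, fun j l hjl => ?_⟩
  by_cases hj : j = i
  · subst hj
    have hln : l ≠ N + t := by tauto
    set n := N + (t : ℕ) with hn
    have hLn : (L : ℤ) < n := by exact_mod_cast (by omega : L < n)
    obtain ⟨r, rfl⟩ : ∃ r, k = r + 1 := ⟨k - 1, by omega⟩
    have h1 : |(n : ℤ) - l| * (n : ℤ) ^ r ≤ |(n : ℤ) ^ (r + 1) - (l : ℤ) ^ (r + 1)| := by
      exact_mod_cast abs_sub_mul_pow_le (n : ℝ) l (by positivity) (by positivity) r
    have h2 : (1 : ℤ) ≤ |(n : ℤ) - l| := Int.one_le_abs (by omega)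
    have h3 : (n : ℤ) ≤ (n : ℤ) ^ r := le_self_pow₀ (by omega) (by omega)
    have h4 : (1 : ℤ) ≤ a j := by exact_mod_cast ha1 j
    rw [← mul_sub, abs_mul, abs_of_pos (by omega : (0 : ℤ) < a j)]
    have h5 : (n : ℤ) ^ r ≤ |(n : ℤ) - l| * (n : ℤ) ^ r :=
      le_mul_of_one_le_left (by positivity) h2
    have h6 := le_mul_of_one_le_left (abs_nonneg ((n : ℤ) ^ (r + 1) - (l : ℤ) ^ (r + 1))) h4
    linarith
  · exact ht j l hj

/-- A run of `L` zero digits multiplies the tail by `b ^ L`; a bounded integer tail therefore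
vanishes at the start of a long run. -/
lemma tail_eq_zero (b L B : ℕ) (hB : B < b ^ L) (d T : ℕ → ℤ)
    (hT : ∀ N, T (N + 1) = b * (T N - d N)) (hbd : ∀ N, |T N| ≤ B) (N : ℕ)
    (h0 : ∀ j < L, d (N + j) = 0) : T N = 0 := by
  have key : ∀ j ≤ L, T (N + j) = (b : ℤ) ^ j * T N := by
    intro j
    induction j with
    | zero => simp
    | succ j ih =>
      intro hj
      rw [← add_assoc, hT, ih (by omega), h0 j (by omega)]
      ring
  by_contra hne
  have h1 := hbd (N + L)
  rw [key L le_rfl, abs_mul, abs_of_nonneg (by positivity)] at h1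
  have h2 : (1 : ℤ) ≤ |T N| := Int.one_le_abs hne
  have h3 : (B : ℤ) < (b : ℤ) ^ L := by exact_mod_cast hB
  nlinarith

/-- The zeros after position `N` give `T (N + 1) = 0`. Those before it give `T (N - L) = 0`, which
propagates to `T N = 0`, and the recursion at `N` then forces `d N = 0`. -/
lemma isolated_digit_of_tail (b L B : ℕ) (hB : B < b ^ L) (hb : 2 ≤ b) (d T : ℕ → ℤ)
    (hT : ∀ N, T (N + 1) = b * (T N - d N)) (hbd : ∀ N, |T N| ≤ B) (N : ℕ) (hLN : L ≤ N)
    (h0 : ∀ M, M ≠ N → |(N : ℤ) - M| ≤ L → d M = 0) : d N = 0 := by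
  have e1 : T (N + 1) = 0 := by
    refine tail_eq_zero b L B hB d T hT hbd _ fun j hj => h0 _ (by omega) ?_
    rw [abs_le]; push_cast; constructor <;> omega
  have e2 : T (N - L) = 0 := by
    refine tail_eq_zero b L B hB d T hT hbd _ fun j hj => h0 _ (by omega) ?_
    rw [abs_le]; push_cast [hLN]; constructor <;> omega
  have e3 : T N = 0 := by
    have key : ∀ j ≤ L, T (N - L + j) = 0 := by
      intro j
      induction j with
      | zero => simpa using e2
      | succ j ih =>
        intro hj
        rw [← add_assoc, hT, ih (by omega), h0 (N - L + j) (by omega)]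
        · simp
        · rw [abs_le]; push_cast [hLN]; constructor <;> omega
    simpa [Nat.sub_add_cancel hLN] using key L le_rfl
  have h := hT N
  rw [e1, e3] at h
  have := (mul_eq_zero.mp h.symm).resolve_left (by omega)
  omega

/-- If a bounded integer digit sequence represents an integer in base `b`, then there is a uniform
`L` such that every nonzero digit at a position `N ≥ L` has another nonzero digit within
distance `L`. -/
lemma digit_eq_zero_of_isolated_s11 (b : ℕ) (hb : 2 ≤ b) (d : ℕ → ℤ) (C : ℕ) (hd : ∀ N, |d N| ≤ C)
    (z : ℤ) (hz : ∑' N, (d N : ℝ) * (1 / (b : ℝ)) ^ N = z) :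
    ∃ L : ℕ, ∀ N, L ≤ N → (∀ M, M ≠ N → |(N : ℤ) - M| ≤ L → d M = 0) → d N = 0 := by
  have hb' : (2 : ℝ) ≤ b := by exact_mod_cast hb
  have hq0 : 0 ≤ 1 / (b : ℝ) := by positivity
  have hq1 : 1 / (b : ℝ) < 1 := by rw [div_lt_one (by linarith)]; linarith
  have hgeo : Summable fun M : ℕ => (C : ℝ) * (1 / (b : ℝ)) ^ M :=
    (summable_geometric_of_lt_one hq0 hq1).mul_left _
  have hle : ∀ N M : ℕ, ‖(d (N + M) : ℝ) * (1 / (b : ℝ)) ^ M‖ ≤ C * (1 / (b : ℝ)) ^ M := by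
    intro N M
    rw [norm_mul, norm_pow, Real.norm_of_nonneg hq0, Real.norm_eq_abs]
    gcongr
    exact_mod_cast hd (N + M)
  have hsum : ∀ N : ℕ, Summable fun M => (d (N + M) : ℝ) * (1 / (b : ℝ)) ^ M := fun N =>
    Summable.of_norm_bounded hgeo (hle N)
  -- The tails, defined by their recursion so that integrality is automatic.
  obtain ⟨T, hT0, hT⟩ : ∃ T : ℕ → ℤ, T 0 = z ∧ ∀ N, T (N + 1) = b * (T N - d N) :=
    ⟨fun N => Nat.rec z (fun N t => b * (t - d N)) N, rfl, fun _ => rfl⟩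
  have htail : ∀ N, ∑' M, (d (N + M) : ℝ) * (1 / (b : ℝ)) ^ M = T N := by
    intro N
    induction N with
    | zero => simpa [hT0] using hz
    | succ N ih =>
      rw [(hsum N).tsum_eq_zero_add] at ih
      have h1 : ∀ M : ℕ, (d (N + (M + 1)) : ℝ) * (1 / (b : ℝ)) ^ (M + 1)
          = 1 / b * ((d (N + 1 + M) : ℝ) * (1 / (b : ℝ)) ^ M) := fun M => by
        rw [show N + (M + 1) = N + 1 + M by ring]
        ring
      simp_rw [h1] at ih
      rw [tsum_mul_left] at ih
      rw [hT]
      push_cast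
      rw [← ih]
      field_simp
      simp
  obtain ⟨B, hB⟩ := exists_nat_ge (∑' M : ℕ, (C : ℝ) * (1 / (b : ℝ)) ^ M)
  have hbd : ∀ N, |T N| ≤ B := fun N => by
    have h1 : ‖(T N : ℝ)‖ ≤ B := by
      rw [← htail N]
      exact (tsum_of_norm_bounded hgeo.hasSum (hle N)).trans hB
    rw [Real.norm_eq_abs] at h1
    exact_mod_cast h1
  exact ⟨B, isolated_digit_of_tail b B B (Nat.lt_pow_self (by omega)) hb d T hT hbd⟩

open Classical in
/-- Indicator function of the set of exponents `A nᵏ` with `n ≥ 1`. -/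
noncomputable def powInd (k A N : ℕ) : ℤ := if ∃ n : ℕ, A * (n + 1) ^ k = N then 1 else 0

/-- The series of the theorem, reindexed by the exponent; `n ↦ A (n + 1)ᵏ` is injective. -/
lemma hasSum_powInd (k b A : ℕ) (hk : 2 ≤ k) (hb : 2 ≤ b) (hA : 1 ≤ A) :
    HasSum (fun N => (powInd k A N : ℝ) * (1 / (b : ℝ)) ^ N)
      (∑' n : ℕ, 1 / (b : ℝ) ^ (A * (n + 1) ^ k)) := by
  have hb' : (2 : ℝ) ≤ b := by exact_mod_cast hb
  have hq0 : 0 ≤ 1 / (b : ℝ) := by positivity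
  have hq1 : 1 / (b : ℝ) < 1 := by rw [div_lt_one (by linarith)]; linarith
  have hsum : Summable fun N => (powInd k A N : ℝ) * (1 / (b : ℝ)) ^ N := by
    refine Summable.of_norm_bounded (summable_geometric_of_lt_one hq0 hq1) fun N => ?_
    rw [norm_mul, norm_pow, Real.norm_of_nonneg hq0]
    refine mul_le_of_le_one_left (by positivity) ?_
    unfold powInd
    split_ifs <;> simp
  have hinj : Function.Injective fun n : ℕ => A * (n + 1) ^ k := fun n n' h => by
    have h1 := Nat.eq_of_mul_eq_mul_left (by omega) h
    have h2 := Nat.pow_left_injective (by omega : k ≠ 0) h1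
    omega
  have h1 := hinj.tsum_eq (f := fun N => (powInd k A N : ℝ) * (1 / (b : ℝ)) ^ N) (by
    intro N hN
    by_contra hcon
    apply hN
    have : powInd k A N = 0 := if_neg hcon
    simp [this])
  convert hsum.hasSum using 1
  rw [← h1]
  refine tsum_congr fun n => ?_
  have : powInd k A (A * (n + 1) ^ k) = 1 := if_pos ⟨n, rfl⟩
  simp [this]

/-- **Theorem 0 (V. Kumar).** Let `k ≥ 2`, `b ≥ 2` and `1 ≤ a₁ < a₂ < ⋯ < a_m` be integers
such that `(a_i/a_j)^{1/k}` is irrational for all `i ≠ j`. Then the numbers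
`1, ∑_{n=1}^∞ 1/b^(a₁·n^k), …, ∑_{n=1}^∞ 1/b^(a_m·n^k)` are linearly independent
over `ℚ`. -/
theorem theorem0 (k b m : ℕ) (hk : 2 ≤ k) (hb : 2 ≤ b)
    (a : Fin m → ℕ) (ha1 : ∀ i, 1 ≤ a i) (hmono : StrictMono a)
    (hirr : ∀ i j : Fin m, i ≠ j →
      Irrational (((a i : ℝ) / (a j : ℝ)) ^ ((1 : ℝ) / k))) :
    LinearIndependent ℚ (fun x : Option (Fin m) =>
      x.elim (1 : ℝ) fun i =>
        ∑' n : ℕ, 1 / (b : ℝ) ^ (a i * (n + 1) ^ k)) := by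
  rw [← LinearIndependent.iff_fractionRing ℤ ℚ, Fintype.linearIndependent_iff]
  intro c hc
  rw [Fintype.sum_option] at hc
  simp only [Option.elim, zsmul_eq_mul, mul_one] at hc
  set d : ℕ → ℤ := fun N => ∑ j, c (some j) * powInd k (a j) N with hd
  have hds : HasSum (fun N => (d N : ℝ) * (1 / (b : ℝ)) ^ N)
      (∑ j, (c (some j) : ℝ) * ∑' n : ℕ, 1 / (b : ℝ) ^ (a j * (n + 1) ^ k)) := by
    have h := hasSum_sum fun j (_ : j ∈ Finset.univ) =>
      (hasSum_powInd k b (a j) hk hb (ha1 j)).mul_left (c (some j) : ℝ)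
    have hfun : (fun N => (d N : ℝ) * (1 / (b : ℝ)) ^ N) = fun N =>
        ∑ j, (c (some j) : ℝ) * ((powInd k (a j) N : ℝ) * (1 / (b : ℝ)) ^ N) := by
      funext N
      simp only [hd]
      push_cast
      rw [Finset.sum_mul]
      exact Finset.sum_congr rfl fun j _ => by ring
    rw [hfun]
    exact h
  have hbound : ∀ N, |d N| ≤ ((∑ j, (c (some j)).natAbs : ℕ) : ℤ) := fun N => by
    push_cast
    refine (Finset.abs_sum_le_sum_abs _ _).trans (Finset.sum_le_sum fun j _ => ?_)
    rw [abs_mul]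
    refine mul_le_of_le_one_right (abs_nonneg _) ?_
    unfold powInd
    split_ifs <;> simp
  obtain ⟨L, hL⟩ := digit_eq_zero_of_isolated_s11 b hb d _ hbound (-c none) (by
    rw [hds.tsum_eq]
    push_cast
    linarith)
  have hsome : ∀ i, c (some i) = 0 := fun i => by
    obtain ⟨n, hn, hiso⟩ := exists_isolated k m L hk a ha1 hirr i
    have hLN : L ≤ a i * n ^ k :=
      hn.le.trans ((Nat.le_self_pow (by omega) n).trans (Nat.le_mul_of_pos_left _ (ha1 i)))
    have hdN : d (a i * n ^ k) = c (some i) := by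
      simp only [hd]
      rw [Finset.sum_eq_single i]
      · have : powInd k (a i) (a i * n ^ k) = 1 :=
          if_pos ⟨n - 1, by rw [Nat.sub_add_cancel (by omega)]⟩
        rw [this, mul_one]
      · intro j _ hj
        have : powInd k (a j) (a i * n ^ k) = 0 := if_neg (by
          rintro ⟨l, hl⟩
          have h := hiso j (l + 1) (Or.inl hj)
          have h' : (a j : ℤ) * (l + 1 : ℕ) ^ k = a i * n ^ k := by exact_mod_cast hl
          rw [h', sub_self, abs_zero] at h
          omega)
        rw [this, mul_zero]
      · simp
    rw [← hdN]
    refine hL _ hLN fun M hM hML => Finset.sum_eq_zero fun j _ => ?_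
    have : powInd k (a j) M = 0 := if_neg (by
      rintro ⟨l, rfl⟩
      have h := hiso j (l + 1) (by
        by_contra! hcon
        obtain ⟨rfl, rfl⟩ := hcon
        exact hM rfl)
      push_cast at h hML
      omega)
    rw [this, mul_zero]
  have hnone : c none = 0 := by
    simp only [hsome, Int.cast_zero, zero_mul, Finset.sum_const_zero, add_zero] at hc
    exact_mod_cast hc
  rintro (_ | i)
  · exact hnone
  · exact hsome i
end
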